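/- arXiv:2604.01061 — 3 statements merged into one kernel-verified Lean document; each statement's English description precedes it below -/
import Mathlib

section
/- Fix integers 0 < d < n. For 1 ≤ b ≤ d and real k ∈ [d−1, n−d] define A(b,k) := Σ_{i=0}^{d−b} C(n−b,i) + Σ_{i=d−b+1}^{d} C(k,i) and B(b,k) := Σ_{i=0}^{d−b} b·C(n−b,i) + Σ_{i=d−b+1}^{d−1} (d−i)·C(k,i), where C(x,i) := x(x−1)⋯(x−i+1)/i! is the generalized binomial coefficient. Fix a value A and, for each b, choose a real k_b ∈ [d−1, n−d] with A(b,k_b) = A. Then B(d,k_d) = min_{1≤b≤d} B(b,k_b). -/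
noncomputable section

/-- The generalized binomial coefficient `C(x, i) = x(x-1)⋯(x-i+1)/i!`. -/
noncomputable def gchoose (x : ℝ) (i : ℕ) : ℝ :=
  (∏ j ∈ Finset.range i, (x - j)) / (Nat.factorial i)

/-- `A(b,k) = ∑_{i=0}^{d-b} C(n-b,i) + ∑_{i=d-b+1}^{d} C(k,i)`. -/
noncomputable def Afun (d n b : ℕ) (k : ℝ) : ℝ :=
  (∑ i ∈ Finset.range (d - b + 1), gchoose ((n : ℝ) - b) i) +
  (∑ i ∈ Finset.Icc (d - b + 1) d, gchoose k i)

/-- `B(b,k) = ∑_{i=0}^{d-b} b·C(n-b,i) + ∑_{i=d-b+1}^{d-1} (d-i)·C(k,i)`. -/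
noncomputable def Bfun (d n b : ℕ) (k : ℝ) : ℝ :=
  (∑ i ∈ Finset.range (d - b + 1), (b : ℝ) * gchoose ((n : ℝ) - b) i) +
  (∑ i ∈ Finset.Icc (d - b + 1) (d - 1), ((d : ℝ) - i) * gchoose k i)

lemma gchoose_mono_aux {x y : ℝ} {i : ℕ} (hx : (i : ℝ) - 1 ≤ x) (hxy : x ≤ y) :
    gchoose x i ≤ gchoose y i := by
  unfold gchoose
  apply div_le_div_of_nonneg_right _ (by positivity)
  apply Finset.prod_le_prod
  · intro j hj
    have h1 : j + 1 ≤ i := by simpa using hj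
    have h2 : (j : ℝ) + 1 ≤ i := by exact_mod_cast h1
    linarith
  · intro j hj
    linarith

lemma gchoose_nat_aux (N i : ℕ) : gchoose (N : ℝ) i = (N.choose i : ℝ) := by
  unfold gchoose
  have h : ∏ j ∈ Finset.range i, ((N : ℝ) - j) = (N.descFactorial i : ℝ) := by
    induction i with
    | zero => simp
    | succ i ih =>
      rw [Finset.prod_range_succ, ih, Nat.descFactorial_succ]
      by_cases hi : i ≤ N
      · push_cast [Nat.cast_sub hi]
        ring
      · rw [Nat.descFactorial_of_lt (by omega)]
        simp
  rw [h, Nat.descFactorial_eq_factorial_mul_choose]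
  push_cast
  field_simp

lemma vander_aux (K m j : ℕ) (hj : j ≤ m) :
    ∑ i ∈ Finset.range (j + 1), K.choose i ≤ (K + m).choose j := by
  rw [Nat.add_choose_eq, Finset.Nat.sum_antidiagonal_eq_sum_range_succ_mk]
  apply Finset.sum_le_sum
  intro i hi
  exact Nat.le_mul_of_pos_right _ (Nat.choose_pos (by omega))

lemma dsum_aux (f : ℕ → ℝ) (m : ℕ) :
    ∑ i ∈ Finset.range (m + 1), ((m : ℝ) + 1 - i) * f i =
      ∑ j ∈ Finset.range (m + 1), ∑ i ∈ Finset.range (j + 1), f i := by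
  induction m with
  | zero => simp
  | succ m ih =>
    rw [Finset.sum_range_succ (fun j => ∑ i ∈ Finset.range (j + 1), f i) (m + 1), ← ih,
      Finset.sum_range_succ _ (m + 1), Finset.sum_range_succ f (m + 1), ← add_assoc, ← Finset.sum_add_distrib]
    congr 1
    · apply Finset.sum_congr rfl
      intro i _
      push_cast
      ring
    · push_cast
      ring

lemma key_aux (K m : ℕ) :
    ∑ i ∈ Finset.range (m + 1), ((m : ℝ) + 1 - i) * gchoose (K : ℝ) i ≤
      ∑ i ∈ Finset.range (m + 1), gchoose ((K + m : ℕ) : ℝ) i := by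
  rw [dsum_aux]
  apply Finset.sum_le_sum
  intro j hj
  simp only [gchoose_nat_aux]
  exact_mod_cast vander_aux K m j (by simp at hj; omega)

lemma A_aux (d n b : ℕ) (k : ℝ) : Afun d n b k =
    (∑ i ∈ Finset.range (d - b + 1), gchoose ((n : ℝ) - b) i) +
    ∑ i ∈ Finset.Ico (d - b + 1) (d + 1), gchoose k i := by
  unfold Afun
  rfl

lemma B_aux (d n b : ℕ) (hb : 1 ≤ b) (hbd : b ≤ d) (k : ℝ) : Bfun d n b k =
    (∑ i ∈ Finset.range (d - b + 1), (b : ℝ) * gchoose ((n : ℝ) - b) i) +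
    ∑ i ∈ Finset.Ico (d - b + 1) (d + 1), ((d : ℝ) - i) * gchoose k i := by
  unfold Bfun
  rw [Finset.sum_Ico_succ_top (by omega)]
  have : Finset.Icc (d - b + 1) (d - 1) = Finset.Ico (d - b + 1) d := by
    ext x
    simp only [Finset.mem_Icc, Finset.mem_Ico]
    omega
  rw [this]
  simp

lemma main_aux (d n b : ℕ) (hb : 1 ≤ b) (hbd : b ≤ d) (hdn : d < n) (k k' : ℝ)
    (hk1 : (d : ℝ) - 1 ≤ k) (hk2 : k ≤ (n : ℝ) - d)
    (hk1' : (d : ℝ) - 1 ≤ k') 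
    (hA : Afun d n d k = Afun d n b k') : Bfun d n d k ≤ Bfun d n b k' := by
  rw [A_aux, A_aux] at hA
  rw [B_aux d n d (by omega) le_rfl, B_aux d n b hb hbd]
  obtain ⟨m, rfl⟩ : ∃ m, d = b + m := ⟨d - b, by omega⟩
  obtain ⟨K, rfl⟩ : ∃ K, n = K + (b + m) := ⟨n - (b + m), by omega⟩
  have e1 : b + m - b = m := by omega
  have e2 : b + m - (b + m) = 0 := by omega
  have g0 : ∀ x : ℝ, gchoose x 0 = 1 := fun x => by simp [gchoose]
  have hN : ((K + (b + m) : ℕ) : ℝ) - b = ((K + m : ℕ) : ℝ) := by push_cast; ring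
  have hKe : ((K + (b + m) : ℕ) : ℝ) - ((b + m : ℕ) : ℝ) = (K : ℝ) := by push_cast; ring
  rw [e1, e2, hN, hKe] at hA
  rw [e1, e2, hN, hKe]
  rw [hKe] at hk2
  have s : ∀ f : ℕ → ℝ, f 0 + ∑ i ∈ Finset.Ico (0 + 1) (b + m + 1), f i =
      ∑ i ∈ Finset.range (m + 1), f i + ∑ i ∈ Finset.Ico (m + 1) (b + m + 1), f i := by
    intro f
    rw [Finset.sum_range_add_sum_Ico _ (by omega), Finset.range_eq_Ico,
      Finset.sum_eq_sum_Ico_succ_bot (a := 0) (by omega)]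
  have sA := s (fun i => gchoose k i)
  have sB := s (fun i => (((b + m : ℕ) : ℝ) - i) * gchoose k i)
  simp only [zero_add, Finset.sum_range_one, g0, Nat.cast_zero, sub_zero] at hA sA sB ⊢
  rw [sA] at hA
  rw [sB]
  have kb : ∀ i : ℕ, i ≤ b + m → (i : ℝ) - 1 ≤ (b + m : ℕ) - 1 := by
    intro i hi
    have : (i : ℝ) ≤ (b + m : ℕ) := by exact_mod_cast hi
    linarith
  have kle : ∀ i ∈ Finset.range (m + 1), gchoose k i ≤ gchoose (K : ℝ) i := by
    intro i hi
    exact gchoose_mono_aux ((kb i (by simp at hi; omega)).trans hk1) hk2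
  have hlow : ∑ i ∈ Finset.range (m + 1), gchoose k i ≤
      ∑ i ∈ Finset.range (m + 1), gchoose ((K + m : ℕ) : ℝ) i := by
    apply Finset.sum_le_sum
    intro i hi
    refine (kle i hi).trans (gchoose_mono_aux ((kb i (by simp at hi; omega)).trans (hk1.trans hk2)) ?_)
    push_cast
    linarith [Nat.cast_nonneg (α := ℝ) m]
  have hkey : ∑ i ∈ Finset.range (m + 1), ((m : ℝ) + 1 - i) * gchoose k i ≤
      ∑ i ∈ Finset.range (m + 1), gchoose ((K + m : ℕ) : ℝ) i := by
    refine le_trans (Finset.sum_le_sum ?_) (key_aux K m)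
    intro i hi
    refine mul_le_mul_of_nonneg_left (kle i hi) ?_
    have : (i : ℝ) ≤ m := by exact_mod_cast (by simp at hi; omega : i ≤ m)
    linarith
  have hb' : (1 : ℝ) ≤ b := by exact_mod_cast hb
  have hhigh : ∑ i ∈ Finset.Ico (m + 1) (b + m + 1), (((b + m : ℕ) : ℝ) - i) * (gchoose k i - gchoose k' i)
      ≤ ((b : ℝ) - 1) * ∑ i ∈ Finset.Ico (m + 1) (b + m + 1), (gchoose k i - gchoose k' i) := by
    rcases le_total k' k with h | h
    · rw [Finset.mul_sum]
      apply Finset.sum_le_sum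
      intro i hi
      simp only [Finset.mem_Ico] at hi
      have h1 : gchoose k' i ≤ gchoose k i :=
        gchoose_mono_aux ((kb i (by omega)).trans hk1') h
      have h2 : (m : ℝ) + 1 ≤ i := by exact_mod_cast hi.1
      refine mul_le_mul_of_nonneg_right ?_ (by linarith)
      push_cast
      linarith
    · have h0 : 0 ≤ ∑ i ∈ Finset.Ico (m + 1) (b + m + 1), (gchoose k i - gchoose k' i) := by
        rw [Finset.sum_sub_distrib]
        linarith
      refine le_trans (Finset.sum_nonpos ?_) (mul_nonneg (by linarith) h0)
      intro i hi
      simp only [Finset.mem_Ico] at hi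
      have h1 : gchoose k i ≤ gchoose k' i :=
        gchoose_mono_aux ((kb i (by omega)).trans hk1) h
      have := kb i (by omega)
      exact mul_nonpos_of_nonneg_of_nonpos (by linarith) (by linarith)
  have e : ∑ i ∈ Finset.range (m + 1), (((b + m : ℕ) : ℝ) - i) * gchoose k i =
      ∑ i ∈ Finset.range (m + 1), ((m : ℝ) + 1 - i) * gchoose k i +
      ((b : ℝ) - 1) * ∑ i ∈ Finset.range (m + 1), gchoose k i := by
    rw [Finset.mul_sum, ← Finset.sum_add_distrib]
    apply Finset.sum_congr rfl
    intro i _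
    push_cast
    ring
  rw [e, ← Finset.mul_sum]
  simp only [mul_sub, Finset.sum_sub_distrib] at hhigh
  have hA' := congrArg (fun t => ((b : ℝ) - 1) * t) hA
  simp only [mul_add] at hA'
  linarith

/-- Fix `0 < d < n`. If for each `1 ≤ b ≤ d` a real
`k_b ∈ [d-1, n-d]` is chosen so that all values `A(b, k_b)` coincide, then
`B(d, k_d) = min_{1 ≤ b ≤ d} B(b, k_b)`. -/
theorem stmt16 (d n : ℕ) (hd : 0 < d) (hdn : d < n)
    (k : ℕ → ℝ)
    (hk : ∀ b, 1 ≤ b → b ≤ d → (d : ℝ) - 1 ≤ k b ∧ k b ≤ (n : ℝ) - d)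
    (A : ℝ)
    (hA : ∀ b, 1 ≤ b → b ≤ d → Afun d n b (k b) = A) :
    Bfun d n d (k d) =
      (Finset.Icc 1 d).inf' (Finset.nonempty_Icc.mpr hd)
        (fun b => Bfun d n b (k b)) := by
  apply le_antisymm
  · apply Finset.le_inf'
    intro b hb
    obtain ⟨h1, h2⟩ := Finset.mem_Icc.mp hb
    exact main_aux d n b h1 h2 hdn _ _ (hk d hd le_rfl).1 (hk d hd le_rfl).2 (hk b h1 h2).1
      ((hA d hd le_rfl).trans (hA b h1 h2).symm)
  · exact Finset.inf'_le (fun b => Bfun d n b (k b)) (Finset.mem_Icc.mpr ⟨hd, le_rfl⟩)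
end
end

section
/- Fix integers 0 < d < n with n ≥ d²/ln 2 + 2d. Then Σ_{i=0}^{d} C(n−d, i) ≥ (1/2)·Σ_{i=0}^{d} C(n, i), where C(m,i) denotes the ordinary binomial coefficient. -/
/-- Fix integers `0 < d < n` with `n ≥ d²/ln 2 + 2d`. Then
`∑_{i=0}^d C(n-d, i) ≥ (1/2)·∑_{i=0}^d C(n, i)` (ordinary binomial coefficients). -/
theorem stmt17 (d n : ℕ) (hd : 0 < d) (hdn : d < n)
    (hn : (d : ℝ) ^ 2 / Real.log 2 + 2 * d ≤ (n : ℝ)) :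
    (1 / 2 : ℝ) * ∑ i ∈ Finset.range (d + 1), (Nat.choose n i : ℝ) ≤
      ∑ i ∈ Finset.range (d + 1), (Nat.choose (n - d) i : ℝ) := by
  have hL : 0 < Real.log 2 := Real.log_pos (by norm_num)
  have hd' : (0 : ℝ) < d := by exact_mod_cast hd
  obtain ⟨x, hx⟩ : ∃ x, x = Real.log 2 / d := ⟨_, rfl⟩
  have hx0 : 0 < x := by rw [hx]; positivity
  have hxn : (d : ℝ) ≤ x * (n - 2 * d) := by
    have h1 : (d : ℝ) ^ 2 / Real.log 2 ≤ n - 2 * d := by linarith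
    calc (d : ℝ) = x * ((d : ℝ) ^ 2 / Real.log 2) := by rw [hx]; field_simp
      _ ≤ _ := mul_le_mul_of_nonneg_left h1 hx0.le
  have h2d : 2 * d ≤ n := by
    have : (0 : ℝ) ≤ (d : ℝ) ^ 2 / Real.log 2 := by positivity
    have : (2 * d : ℝ) ≤ n := by linarith
    exact_mod_cast this
  have hc1 : x + 1 ≤ Real.exp x := Real.add_one_le_exp x
  have hcd : Real.exp x ^ d = 2 := by
    rw [← Real.exp_nat_mul, hx, mul_div_cancel₀ _ hd'.ne', Real.exp_log (by norm_num)]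
  have key : ∀ i, i ≤ d → (Nat.choose n i : ℝ) ≤ Real.exp x ^ i * (Nat.choose (n - d) i : ℝ) := by
    intro i
    induction i with
    | zero => intro _; simp
    | succ i ih =>
      intro hi
      have ih := ih (by omega)
      have e1 : (Nat.choose n (i+1) : ℝ) * (i + 1) = Nat.choose n i * ((n : ℝ) - i) := by
        have := Nat.choose_succ_right_eq n i
        rw [← Nat.cast_sub (by omega)]
        exact_mod_cast this
      have e2 : (Nat.choose (n - d) (i+1) : ℝ) * (i + 1)
          = Nat.choose (n - d) i * ((n : ℝ) - d - i) := by
        have := Nat.choose_succ_right_eq (n - d) i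
        rw [← Nat.cast_sub (by omega), ← Nat.cast_sub (by omega)]
        exact_mod_cast this
      have hid : (i : ℝ) + 1 ≤ d := by exact_mod_cast hi
      have h2d' : (2 * d : ℝ) ≤ n := by exact_mod_cast h2d
      have hm : (0 : ℝ) ≤ (n : ℝ) - d - i := by linarith
      have hstep : (n : ℝ) - i ≤ Real.exp x * ((n : ℝ) - d - i) := by
        have a := mul_le_mul_of_nonneg_right hc1 hm
        have b : x * ((n : ℝ) - 2 * d) ≤ x * ((n : ℝ) - d - i) :=
          mul_le_mul_of_nonneg_left (by linarith) hx0.le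
        linarith
      have hi1 : (0 : ℝ) < (i : ℝ) + 1 := by positivity
      refine le_of_mul_le_mul_right ?_ hi1
      rw [e1, mul_assoc, e2]
      calc (Nat.choose n i : ℝ) * ((n : ℝ) - i)
          ≤ (Real.exp x ^ i * (Nat.choose (n - d) i : ℝ)) * (Real.exp x * ((n : ℝ) - d - i)) :=
            mul_le_mul ih hstep (by linarith) (by positivity)
        _ = _ := by ring
  rw [Finset.mul_sum]
  refine Finset.sum_le_sum fun i hi => ?_
  have hi : i ≤ d := by have := Finset.mem_range.1 hi; omega
  have h2 : Real.exp x ^ i ≤ 2 := by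
    rw [← hcd]
    exact pow_le_pow_right₀ (by linarith) hi
  have h3 := mul_le_mul_of_nonneg_right h2 (Nat.cast_nonneg (α := ℝ) (Nat.choose (n - d) i))
  have h4 := key i hi
  linarith
end

section
/- Let k ≥ 4 and let p_1,…,p_k be points on a circle in ℝ², in convex position, such that no three diagonals of the convex polygon P := conv{p_1,…,p_k} meet at a common interior point of P. Let 𝓗 be the arrangement consisting of all C(k,2) lines through pairs p_i, p_j, and let S be the set of chambers of 𝓗 contained in P. Then |S| = C(k,4) + C(k,2) − k + 1 and |∂S| = k. In particular, for this (non-general-position) arrangement |∂S| = Θ(|S|^{1/4}). -/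
open Set Topology

noncomputable section

/-- The line in the Euclidean plane through two (distinct) points. -/
def lineThrough (x y : EuclideanSpace ℝ (Fin 2)) : Set (EuclideanSpace ℝ (Fin 2)) :=
  {z | ∃ t : ℝ, z = x + t • (y - x)}

/-- The arrangement of all lines through pairs of the points `p i`. -/
def linesOf {k : ℕ} (p : Fin k → EuclideanSpace ℝ (Fin 2)) :
    Set (Set (EuclideanSpace ℝ (Fin 2))) :=
  {L | ∃ i j : Fin k, i ≠ j ∧ L = lineThrough (p i) (p j)}

/-- The complement of the union of the lines. -/
def freePts {k : ℕ} (p : Fin k → EuclideanSpace ℝ (Fin 2)) :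
    Set (EuclideanSpace ℝ (Fin 2)) :=
  {x | ∀ L ∈ linesOf p, x ∉ L}

/-- The chambers of the line arrangement: connected components of the complement. -/
def chambersOf {k : ℕ} (p : Fin k → EuclideanSpace ℝ (Fin 2)) :
    Set (Set (EuclideanSpace ℝ (Fin 2))) :=
  {C | ∃ x ∈ freePts p, C = connectedComponentIn (freePts p) x}

/-- Adjacency in the chamber graph: two distinct chambers sharing a common facet,
i.e. whose closures have a common point lying on exactly one line of the
arrangement. -/
def AdjOf {k : ℕ} (p : Fin k → EuclideanSpace ℝ (Fin 2))
    (C C' : Set (EuclideanSpace ℝ (Fin 2))) : Prop :=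
  C ∈ chambersOf p ∧ C' ∈ chambersOf p ∧ C ≠ C' ∧
  ∃ x, x ∈ closure C ∧ x ∈ closure C' ∧ ∃! L, L ∈ linesOf p ∧ x ∈ L

/-- The edge boundary of a set `S` of chambers, as ordered pairs `(C, C')` of
adjacent chambers with `C ∈ S`, `C' ∉ S`. -/
def edgeBoundaryOf {k : ℕ} (p : Fin k → EuclideanSpace ℝ (Fin 2))
    (S : Set (Set (EuclideanSpace ℝ (Fin 2)))) :
    Set (Set (EuclideanSpace ℝ (Fin 2)) × Set (EuclideanSpace ℝ (Fin 2))) :=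
  {q | q.1 ∈ S ∧ q.2 ∉ S ∧ AdjOf p q.1 q.2}

abbrev E2 := EuclideanSpace ℝ (Fin 2)

def IsAff (f : E2 → ℝ) : Prop := ∃ a b c : ℝ, ∀ x, f x = a * x 0 + b * x 1 + c

lemma IsAff.line {f : E2 → ℝ} (hf : IsAff f) (x y : E2) (t : ℝ) :
    f (x + t • (y - x)) = (1 - t) * f x + t * f y := by
  obtain ⟨a, b, c, h⟩ := hf
  simp only [h, PiLp.add_apply, PiLp.smul_apply, PiLp.sub_apply, smul_eq_mul]
  ring

lemma IsAff.cont {f : E2 → ℝ} (hf : IsAff f) : Continuous f := by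
  obtain ⟨a, b, c, h⟩ := hf
  have : f = fun x => a * x 0 + b * x 1 + c := funext h
  rw [this]
  fun_prop

lemma tendsto_line (z w : E2) :
    Filter.Tendsto (fun t : ℝ => z + t • (w - z)) (𝓝 0) (𝓝 z) := by
  have : Continuous (fun t : ℝ => z + t • (w - z)) := by fun_prop
  have h := this.tendsto 0
  simpa using h

lemma Convex.line {V : Set E2} (hV : Convex ℝ V) {x y : E2} (hx : x ∈ V) (hy : y ∈ V)
    {t : ℝ} (h0 : 0 ≤ t) (h1 : t ≤ 1) : x + t • (y - x) ∈ V := by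
  have := hV hx hy (a := 1 - t) (b := t) (by linarith) h0 (by ring)
  convert this using 1
  module

open Classical in
def cells {ι : Type*} (f : ι → E2 → ℝ) (V : Set E2) (F : Finset ι) : Set (Finset ι) :=
  {T | ∃ x ∈ V, (∀ i ∈ F, f i x ≠ 0) ∧ T = F.filter (fun i => 0 < f i x)}

lemma cells_finite {ι : Type*} (f : ι → E2 → ℝ) (V : Set E2) (F : Finset ι) :
    (cells f V F).Finite := by
  classical
  apply (F.powerset : Finset (Finset ι)).finite_toSet.subset
  rintro T ⟨x, _, _, rfl⟩
  rw [Finset.mem_coe, Finset.mem_powerset]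
  exact Finset.filter_subset _ _

/-- eventual sign stability -/
lemma sign_stable {ι : Type*} {f : ι → E2 → ℝ} (hf : ∀ i, IsAff (f i)) (F : Finset ι)
    (z w : E2) (hz : ∀ i ∈ F, f i z ≠ 0) :
    ∀ᶠ t in 𝓝 (0:ℝ), ∀ i ∈ F, 0 < f i z * f i (z + t • (w - z)) := by
  rw [Filter.eventually_all_finset]
  intro i hi
  have h1 : Filter.Tendsto (fun t : ℝ => f i z * f i (z + t • (w - z))) (𝓝 0)
      (𝓝 (f i z * f i z)) :=
    Filter.Tendsto.const_mul _ (((hf i).cont.tendsto z).comp (tendsto_line z w))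
  have h2 : 0 < f i z * f i z := by
    exact mul_self_pos.2 (hz i hi)
  exact h1.eventually (lt_mem_nhds h2)

lemma filter_eq_of {ι : Type*} [DecidableEq ι] {F : Finset ι} {f : ι → E2 → ℝ} {x y : E2}
    (h : ∀ i ∈ F, 0 < f i x * f i y) :
    (∀ i ∈ F, f i y ≠ 0) ∧
    F.filter (fun i => 0 < f i x) = F.filter (fun i => 0 < f i y) := by
  refine ⟨fun i hi h0 => ?_, ?_⟩
  · have := h i hi
    rw [h0] at this
    simp at this
  · apply Finset.filter_congr
    intro i hi
    rcases pos_and_pos_or_neg_and_neg_of_mul_pos (h i hi) with h | h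
    · simp only [h.1, h.2]
    · simp only [h.1.not_gt, h.2.not_gt]

lemma of_filter_eq {ι : Type*} [DecidableEq ι] {F : Finset ι} {f : ι → E2 → ℝ} {x y : E2}
    (hx : ∀ i ∈ F, f i x ≠ 0) (hy : ∀ i ∈ F, f i y ≠ 0)
    (h : F.filter (fun i => 0 < f i x) = F.filter (fun i => 0 < f i y)) :
    ∀ i ∈ F, 0 < f i x * f i y := by
  intro i hi
  have h1 := Finset.ext_iff.1 h i
  simp only [Finset.mem_filter, hi, true_and] at h1
  rcases lt_or_gt_of_ne (hx i hi) with h2 | h2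
  · have h3 : f i y < 0 := lt_of_le_of_ne (not_lt.1 fun h => absurd (h1.2 h) h2.not_gt) (hy i hi)
    exact mul_pos_of_neg_of_neg h2 h3
  · exact mul_pos h2 (h1.1 h2)

/-- same signs persist along segments -/
lemma sign_seg {f : E2 → ℝ} (hf : IsAff f) {x y : E2} (h : 0 < f x * f y) {t : ℝ}
    (h0 : 0 ≤ t) (h1 : t ≤ 1) : 0 < f x * f (x + t • (y - x)) := by
  rw [hf.line]
  have hx : 0 < f x * f x := by
    have : f x ≠ 0 := by rintro h'; simp [h'] at h
    exact mul_self_pos.2 this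
  have : f x * ((1 - t) * f x + t * f y) = (1 - t) * (f x * f x) + t * (f x * f y) := by ring
  rw [this]
  rcases h0.eq_or_lt with h0 | h0
  · subst h0; simpa using hx
  · have := mul_pos h0 h
    have := mul_nonneg (sub_nonneg.2 h1) hx.le
    linarith

lemma exists_small {P : ℝ → Prop} (h : ∀ᶠ t in 𝓝 (0:ℝ), P t) : ∃ t > 0, P t ∧ P (-t) := by
  obtain ⟨e, he, hb⟩ := Metric.eventually_nhds_iff.1 h
  refine ⟨e/2, by positivity, hb ?_, hb ?_⟩ <;> simp [abs_of_pos he] <;> linarith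

lemma del_res {ι : Type*} [DecidableEq ι] {f : ι → E2 → ℝ} (hf : ∀ i, IsAff (f i)) {V : Set E2}
    (hV : Convex ℝ V) {F : Finset ι} {m : ι} (hm : m ∉ F)
    (hp : ∀ z ∈ V, f m z = 0 → ∃ w, f m w ≠ 0 ∧ ∀ᶠ t in 𝓝 (0:ℝ), z + t • (w - z) ∈ V) :
    (cells f V (insert m F)).ncard =
      (cells f V F).ncard + (cells f (V ∩ {x | f m x = 0}) F).ncard := by
  classical
  set A := cells f (V ∩ {x | f m x < 0}) F with hA
  set B := cells f (V ∩ {x | 0 < f m x}) F with hB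
  have key : ∀ z ∈ V, f m z = 0 → (∀ i ∈ F, f i z ≠ 0) →
      F.filter (fun i => 0 < f i z) ∈ A ∧ F.filter (fun i => 0 < f i z) ∈ B := by
    intro z hz hmz hFz
    obtain ⟨w, hw, hwV⟩ := hp z hz hmz
    obtain ⟨t, ht, ⟨h1, h2⟩, h3, h4⟩ := exists_small (hwV.and (sign_stable hf F z w hFz))
    have e1 := filter_eq_of h2
    have e2 := filter_eq_of h4
    have l1 : f m (z + t • (w - z)) = t * f m w := by rw [(hf m).line, hmz]; ring
    have l2 : f m (z + (-t) • (w - z)) = - (t * f m w) := by rw [(hf m).line, hmz]; ring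
    rcases lt_or_gt_of_ne hw with hw | hw
    · have := mul_neg_of_pos_of_neg ht hw
      exact ⟨⟨_, ⟨h1, by simp only [mem_ofPred_eq]; linarith⟩, e1⟩,
        ⟨_, ⟨h3, by simp only [mem_ofPred_eq]; linarith⟩, e2⟩⟩
    · have := mul_pos ht hw
      exact ⟨⟨_, ⟨h3, by simp only [mem_ofPred_eq]; linarith⟩, e2⟩,
        ⟨_, ⟨h1, by simp only [mem_ofPred_eq]; linarith⟩, e1⟩⟩
  have hun : A ∪ B = cells f V F := by
    ext T
    constructor
    · rintro (⟨x, hx, h⟩ | ⟨x, hx, h⟩) <;> exact ⟨x, hx.1, h⟩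
    · rintro ⟨x, hx, h, rfl⟩
      rcases lt_trichotomy (f m x) 0 with h0 | h0 | h0
      · exact Or.inl ⟨x, ⟨hx, h0⟩, h, rfl⟩
      · exact Or.inl (key x hx h0 h).1
      · exact Or.inr ⟨x, ⟨hx, h0⟩, h, rfl⟩
  have hin : A ∩ B = cells f (V ∩ {x | f m x = 0}) F := by
    ext T
    constructor
    · rintro ⟨⟨x, hx, h, rfl⟩, ⟨y, hy, h', hT⟩⟩
      have hs := of_filter_eq h h' hT
      have hx2 : f m x < 0 := hx.2
      have hy2 : 0 < f m y := hy.2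
      set t := - f m x / (f m y - f m x) with ht
      have hd : 0 < f m y - f m x := by linarith
      have h0 : 0 ≤ t := div_nonneg (by linarith) hd.le
      have h1 : t ≤ 1 := by rw [ht, div_le_one hd]; linarith
      refine ⟨x + t • (y - x), ⟨hV.line hx.1 hy.1 h0 h1, ?_⟩, 
        filter_eq_of fun i hi => sign_seg (hf i) (hs i hi) h0 h1⟩
      simp only [mem_ofPred_eq]
      rw [(hf m).line, ht]
      field_simp
      ring
    · rintro ⟨z, ⟨hz, hz0⟩, h, rfl⟩
      exact key z hz hz0 h
  have hsp : cells f V (insert m F) = A ∪ (insert m) '' B := by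
    ext T
    constructor
    · rintro ⟨x, hx, h, rfl⟩
      have hF : ∀ i ∈ F, f i x ≠ 0 := fun i hi => h i (Finset.mem_insert_of_mem hi)
      rcases lt_or_gt_of_ne (h m (Finset.mem_insert_self _ _)) with h0 | h0
      · left
        exact ⟨x, ⟨hx, h0⟩, hF, by rw [Finset.filter_insert, if_neg h0.not_gt]⟩
      · right
        exact ⟨_, ⟨x, ⟨hx, h0⟩, hF, rfl⟩, by rw [Finset.filter_insert, if_pos h0]⟩
    · rintro (⟨x, ⟨hx, h0⟩, h, rfl⟩ | ⟨_, ⟨x, ⟨hx, h0⟩, h, rfl⟩, rfl⟩)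
      · refine ⟨x, hx, ?_, by rw [Finset.filter_insert, if_neg (not_lt.2 (le_of_lt h0))]⟩
        intro i hi
        rcases Finset.mem_insert.1 hi with rfl | hi
        · exact ne_of_lt h0
        · exact h i hi
      · refine ⟨x, hx, ?_, by rw [Finset.filter_insert, if_pos (by exact h0)]⟩
        intro i hi
        rcases Finset.mem_insert.1 hi with rfl | hi
        · exact ne_of_gt h0
        · exact h i hi
  have hnm : ∀ W : Set E2, ∀ T ∈ cells f W F, m ∉ T := by
    rintro W T ⟨x, _, _, rfl⟩ hmT
    exact hm (Finset.mem_filter.1 hmT).1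
  have fA : A.Finite := cells_finite _ _ _
  have fB : B.Finite := cells_finite _ _ _
  rw [hsp, Set.ncard_union_eq _ fA (fB.image _), Set.ncard_image_of_injOn, ← hun, ← hin,
    Set.ncard_union_add_ncard_inter _ _ fA fB]
  · intro T hT T' hT' h
    have h2 := congrArg (fun s => Finset.erase s m) h
    simpa [Finset.erase_insert (hnm _ _ hT), Finset.erase_insert (hnm _ _ hT')] using h2
  · rw [Set.disjoint_left]
    rintro T hT ⟨T', _, rfl⟩
    exact hnm _ _ hT (Finset.mem_insert_self _ _)
def Dt (a b c : E2) : ℝ := (b 0 - a 0) * (c 1 - a 1) - (b 1 - a 1) * (c 0 - a 0)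

lemma exists_sort {k : ℕ} (p : Fin k → E2) (o : E2) (r : ℝ) (hr : 0 < r)
    (hcirc : ∀ i, dist (p i) o = r) (hinj : Function.Injective p) :
    ∃ σ : Equiv.Perm (Fin k), ∀ i j l, i < j → j < l → 0 < Dt (p (σ i)) (p (σ j)) (p (σ l)) := by
  set z : Fin k → ℂ := fun i => ⟨p i 0 - o 0, p i 1 - o 1⟩ with hz
  have hn : ∀ i, ‖z i‖ = r := by
    intro i
    rw [← hcirc i, EuclideanSpace.dist_eq, Complex.norm_eq_sqrt_sq_add_sq]
    simp [hz, Real.dist_eq, Fin.sum_univ_two]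
  set θ : Fin k → ℝ := fun i => Complex.arg (z i) with hθ
  have h0 : ∀ i, p i 0 = o 0 + r * Real.cos (θ i) := by
    intro i
    have := Complex.norm_mul_cos_arg (z i)
    rw [hn] at this
    have h2 : θ i = (z i).arg := rfl
    rw [h2, this]; simp only [hz]; ring
  have h1 : ∀ i, p i 1 = o 1 + r * Real.sin (θ i) := by
    intro i
    have := Complex.norm_mul_sin_arg (z i)
    rw [hn] at this
    have h2 : θ i = (z i).arg := rfl
    rw [h2, this]; simp only [hz]; ring
  have hi : Function.Injective θ := by
    intro i j h
    apply hinj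
    ext a
    fin_cases a
    · simp [h0, h]
    · simp [h1, h]
  have hm := Tuple.monotone_sort θ
  have hsm : StrictMono (θ ∘ Tuple.sort θ) :=
    hm.strictMono_of_injective (hi.comp (Tuple.sort θ).injective)
  refine ⟨Tuple.sort θ, fun i j l hij hjl => ?_⟩
  have a1 := hsm hij
  have a2 := hsm hjl
  simp only [Function.comp] at a1 a2
  set α := θ (Tuple.sort θ i) with hα
  set β := θ (Tuple.sort θ j)
  set γ := θ (Tuple.sort θ l) with hγ
  have b1 : -Real.pi < α := Complex.neg_pi_lt_arg _
  have b2 : γ ≤ Real.pi := Complex.arg_le_pi _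
  have e : Dt (p (Tuple.sort θ i)) (p (Tuple.sort θ j)) (p (Tuple.sort θ l)) =
      r ^ 2 * (4 * Real.sin ((β - α) / 2) * Real.sin ((γ - β) / 2) * Real.sin ((γ - α) / 2)) := by
    have e1 : Dt (p (Tuple.sort θ i)) (p (Tuple.sort θ j)) (p (Tuple.sort θ l)) =
      r ^ 2 * (Real.sin (2 * ((β - α) / 2)) + Real.sin (2 * ((γ - β) / 2))
        - Real.sin (2 * ((β - α) / 2) + 2 * ((γ - β) / 2))) := by
      have x1 : 2 * ((β - α) / 2) + 2 * ((γ - β) / 2) = γ - α := by ring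
      have x2 : 2 * ((β - α) / 2) = β - α := by ring
      have x3 : 2 * ((γ - β) / 2) = γ - β := by ring
      rw [x1, x2, x3]
      simp only [Dt, h0, h1, Real.sin_sub]
      ring
    have x4 : (γ - α) / 2 = (β - α) / 2 + (γ - β) / 2 := by ring
    rw [e1, x4]
    generalize (β - α) / 2 = A
    generalize (γ - β) / 2 = B
    rw [Real.sin_add (2 * A), Real.sin_two_mul, Real.sin_two_mul, Real.cos_two_mul',
      Real.cos_two_mul', Real.sin_add]
    have c1 := Real.cos_sq' A
    have c2 := Real.cos_sq' B
    rw [c1, c2]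
    ring
  rw [e]
  have s1 : 0 < Real.sin ((β - α) / 2) := Real.sin_pos_of_pos_of_lt_pi (by linarith) (by linarith)
  have s2 : 0 < Real.sin ((γ - β) / 2) := Real.sin_pos_of_pos_of_lt_pi (by linarith) (by linarith)
  have s3 : 0 < Real.sin ((γ - α) / 2) := Real.sin_pos_of_pos_of_lt_pi (by linarith) (by linarith)
  positivity

section geo

def fq {k : ℕ} (p : Fin k → E2) (q : Fin k × Fin k) (x : E2) : ℝ :=
  if q.1.val = 0 ∧ q.2.val + 1 = k then - Dt (p q.1) (p q.2) x else Dt (p q.1) (p q.2) x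

def IsSide {k : ℕ} (q : Fin k × Fin k) : Prop :=
  q.1.val + 1 = q.2.val ∨ (q.1.val = 0 ∧ q.2.val + 1 = k)

instance {k : ℕ} (q : Fin k × Fin k) : Decidable (IsSide q) := by unfold IsSide; infer_instance

def PP (k : ℕ) : Finset (Fin k × Fin k) := Finset.univ.filter fun q => q.1 < q.2

def XX {k : ℕ} (q m : Fin k × Fin k) : Prop := q.1 < m.1 ∧ m.1 < q.2 ∧ q.2 < m.2

instance {k : ℕ} (q m : Fin k × Fin k) : Decidable (XX q m) := by unfold XX; infer_instance

def UU {k : ℕ} (p : Fin k → E2) : Set E2 := {x | ∀ q ∈ PP k, IsSide q → 0 < fq p q x}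

def HH {k : ℕ} (p : Fin k → E2) : Prop :=
  ∀ i j l, i < j → j < l → 0 < Dt (p i) (p j) (p l)

variable {k : ℕ} {p : Fin k → E2}

@[simp] lemma mem_PP {q : Fin k × Fin k} : q ∈ PP k ↔ q.1 < q.2 := by simp [PP]

lemma Dt_aff (a b : E2) : IsAff (Dt a b) :=
  ⟨-(b 1 - a 1), b 0 - a 0, -(b 0 - a 0) * a 1 + (b 1 - a 1) * a 0, fun x => by
    simp only [Dt]; ring⟩

lemma fq_aff (p : Fin k → E2) (q) : IsAff (fq p q) := by
  by_cases h : q.1.val = 0 ∧ q.2.val + 1 = k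
  · obtain ⟨a, b, c, h'⟩ := Dt_aff (p q.1) (p q.2)
    refine ⟨-a, -b, -c, fun x => ?_⟩
    simp only [fq, h, h', and_self, if_true]
    ring
  · obtain ⟨a, b, c, h'⟩ := Dt_aff (p q.1) (p q.2)
    refine ⟨a, b, c, fun x => ?_⟩
    simp only [fq, h, h', if_false]

lemma fq_eq_zero {q : Fin k × Fin k} {x : E2} : fq p q x = 0 ↔ Dt (p q.1) (p q.2) x = 0 := by
  unfold fq; split_ifs <;> simp

lemma Dt_cyc (a b c : E2) : Dt a b c = Dt b c a := by simp only [Dt]; ring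
lemma Dt_swap (a b c : E2) : Dt a b c = - Dt a c b := by simp only [Dt]; ring

lemma fq_left (q : Fin k × Fin k) : fq p q (p q.1) = 0 := by
  rw [fq_eq_zero]; simp [Dt]

lemma fq_right (q : Fin k × Fin k) : fq p q (p q.2) = 0 := by
  rw [fq_eq_zero]; simp only [Dt]; ring

lemma Dt_out (H : HH p) {a c l : Fin k} (hac : a < c) (h : l < a ∨ c < l) :
    0 < Dt (p a) (p c) (p l) := by
  rcases h with h | h
  · rw [← Dt_cyc]; exact H _ _ _ h hac
  · exact H _ _ _ hac h

lemma Dt_in (H : HH p) {a c l : Fin k} (h : a < l) (h' : l < c) :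
    Dt (p a) (p c) (p l) < 0 := by
  rw [Dt_swap]
  have := H _ _ _ h h'
  linarith

lemma fq_ne (H : HH p) {q : Fin k × Fin k} (hq : q ∈ PP k) {l : Fin k} (h1 : l ≠ q.1)
    (h2 : l ≠ q.2) : fq p q (p l) ≠ 0 := by
  rw [mem_PP] at hq
  rw [Ne, fq_eq_zero]
  by_cases h : l < q.1 ∨ q.2 < l
  · exact (Dt_out H hq h).ne'
  · exact (Dt_in H (c := q.2) (by omega) (by omega)).ne

lemma fq_side_pos (H : HH p) {q : Fin k × Fin k} (hq : q ∈ PP k) (hs : IsSide q) {l : Fin k}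
    (h1 : l ≠ q.1) (h2 : l ≠ q.2) : 0 < fq p q (p l) := by
  rw [mem_PP] at hq
  unfold IsSide at hs
  unfold fq
  split_ifs with h
  · have := Dt_in H (a := q.1) (c := q.2) (l := l) (by omega) (by omega)
    linarith
  · exact Dt_out H hq (by omega)

lemma fq_side_nonneg (H : HH p) {q : Fin k × Fin k} (hq : q ∈ PP k) (hs : IsSide q) (l : Fin k) :
    0 ≤ fq p q (p l) := by
  by_cases h1 : l = q.1
  · rw [h1, fq_left]
  by_cases h2 : l = q.2
  · rw [h2, fq_right]
  exact (fq_side_pos H hq hs h1 h2).le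

lemma fq_out (H : HH p) {q : Fin k × Fin k} (hq : q ∈ PP k)
    {l : Fin k} (h : l ≤ q.1 ∨ q.2 ≤ l) : 0 ≤ fq p q (p l) := by
  by_cases h1 : l = q.1
  · rw [h1, fq_left]
  by_cases h2 : l = q.2
  · rw [h2, fq_right]
  rw [mem_PP] at hq
  unfold fq
  rw [if_neg (by omega)]
  exact (Dt_out H hq (by omega)).le

lemma fq_in (H : HH p) {q : Fin k × Fin k} (hq : q ∈ PP k) (hs : ¬ IsSide q)
    {l : Fin k} (h : q.1 ≤ l ∧ l ≤ q.2) : fq p q (p l) ≤ 0 := by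
  by_cases h1 : l = q.1
  · rw [h1, fq_left]
  by_cases h2 : l = q.2
  · rw [h2, fq_right]
  unfold IsSide at hs
  unfold fq
  rw [if_neg (by omega)]
  exact (Dt_in H (by omega) (by omega)).le

lemma not_both_zero (H : HH p) {q m : Fin k × Fin k} (hq : q ∈ PP k) (hm : m ∈ PP k)
    (hne : q ≠ m) : fq p q (p m.1) ≠ 0 ∨ fq p q (p m.2) ≠ 0 := by
  by_contra! h
  rw [mem_PP] at hm
  have h1 : m.1 = q.1 ∨ m.1 = q.2 := by
    by_contra! h'
    exact fq_ne H hq h'.1 h'.2 h.1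
  have h2 : m.2 = q.1 ∨ m.2 = q.2 := by
    by_contra! h'
    exact fq_ne H hq h'.1 h'.2 h.2
  rw [mem_PP] at hq
  apply hne
  ext <;> omega

lemma same_side (H : HH p) {q m : Fin k × Fin k} (hq : q ∈ PP k) (hm : m ∈ PP k)
    (hX : ¬ XX q m) (hX' : ¬ XX m q) :
    (0 ≤ fq p q (p m.1) ∧ 0 ≤ fq p q (p m.2)) ∨ (fq p q (p m.1) ≤ 0 ∧ fq p q (p m.2) ≤ 0) := by
  by_cases hs : IsSide q
  · exact Or.inl ⟨fq_side_nonneg H hq hs _, fq_side_nonneg H hq hs _⟩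
  have hq' := hq
  have hm' := hm
  rw [mem_PP] at hq' hm'
  unfold XX at hX hX'
  by_cases h : (m.1 ≤ q.1 ∨ q.2 ≤ m.1) ∧ (m.2 ≤ q.1 ∨ q.2 ≤ m.2)
  · exact Or.inl ⟨fq_out H hq h.1, fq_out H hq h.2⟩
  · exact Or.inr ⟨fq_in H hq hs (by omega), fq_in H hq hs (by omega)⟩

/-- nonvanishing with sign on the open segment for non-crossing pairs -/
lemma seg_sign (H : HH p) {q m : Fin k × Fin k} (hq : q ∈ PP k) (hm : m ∈ PP k) (hne : q ≠ m)
    (hX : ¬ XX q m) (hX' : ¬ XX m q) {s t : ℝ} (hs : 0 < s) (hs1 : s < 1) (ht : 0 < t)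
    (ht1 : t < 1) :
    0 < fq p q (p m.1 + s • (p m.2 - p m.1)) * fq p q (p m.1 + t • (p m.2 - p m.1)) := by
  rw [(fq_aff p q).line, (fq_aff p q).line]
  have h1 := not_both_zero H hq hm hne
  have key : ∀ a b : ℝ, 0 ≤ a → 0 ≤ b → (a ≠ 0 ∨ b ≠ 0) →
      0 < ((1 - s) * a + s * b) * ((1 - t) * a + t * b) := by
    intro a b ha hb h
    have s1 : 0 < 1 - s := by linarith
    have t1 : 0 < 1 - t := by linarith
    rcases h with h | h
    · have : 0 < a := lt_of_le_of_ne ha h.symm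
      positivity
    · have : 0 < b := lt_of_le_of_ne hb h.symm
      positivity
  rcases same_side H hq hm hX hX' with h | h
  · exact key _ _ h.1 h.2 h1
  · have := key (- fq p q (p m.1)) (- fq p q (p m.2)) (by linarith [h.1]) (by linarith [h.2])
      (by simpa using h1)
    linarith [this]

lemma side_not_X {q m : Fin k × Fin k} (hm : IsSide m) (hq : q ∈ PP k) :
    ¬ XX q m ∧ ¬ XX m q := by
  unfold XX IsSide at *
  omega

lemma diag_mem_U (H : HH p) {m : Fin k × Fin k} (hm : m ∈ PP k) (hs : ¬ IsSide m) {t : ℝ}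
    (ht : 0 < t) (ht1 : t < 1) : p m.1 + t • (p m.2 - p m.1) ∈ UU p := by
  intro q hq hqs
  have hne : q ≠ m := by rintro rfl; exact hs hqs
  rw [(fq_aff p q).line]
  have s1 : 0 < 1 - t := by linarith
  have a := fq_side_nonneg H hq hqs m.1
  have b := fq_side_nonneg H hq hqs m.2
  rcases not_both_zero H hq hm hne with h | h
  · have := lt_of_le_of_ne a h.symm
    positivity
  · have := lt_of_le_of_ne b h.symm
    positivity

lemma UU_convex : Convex ℝ (UU p) := by
  intro x hx y hy a b ha hb hab q hq hs
  have e : a • x + b • y = x + b • (y - x) := by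
    have : a = 1 - b := by linarith
    subst this; module
  rw [e, (fq_aff p q).line]
  have h1 := hx q hq hs
  have h2 := hy q hq hs
  have : a = 1 - b := by linarith
  rw [← this]
  rcases ha.eq_or_lt with h | h
  · have : b = 1 := by linarith
    subst this; subst h; simpa using h2
  · positivity

lemma UU_open : IsOpen (UU p) := by
  have : UU p = ⋂ q ∈ PP k, {x | IsSide q → 0 < fq p q x} := by
    ext x; simp [UU]
  rw [this]
  apply isOpen_biInter_finset
  intro q _
  by_cases h : IsSide q
  · simp only [h, true_imp_iff]
    exact isOpen_lt continuous_const (fq_aff p q).cont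
  · simp [h]

lemma inj_of_HH (hk : 4 ≤ k) (H : HH p) : Function.Injective p := by
  have key : ∀ i j, i < j → p i ≠ p j := by
    intro i j hij h
    obtain ⟨l, h1, h2⟩ : ∃ l : Fin k, l ≠ i ∧ l ≠ j := by
      by_contra! h
      have h3 := h ⟨0, by omega⟩
      have h4 := h ⟨1, by omega⟩
      have h5 := h ⟨2, by omega⟩
      simp only [Ne, Fin.ext_iff] at h3 h4 h5
      by_cases c0 : 0 = i.val
      · have d1 := h4 (by omega)
        have d2 := h5 (by omega)
        omega
      · have d0 := h3 c0
        by_cases c1 : 1 = i.val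
        · have d2 := h5 (by omega)
          omega
        · have d2 := h4 (by omega)
          omega
    apply fq_ne H (q := (i, j)) (by simpa) h1 h2
    rw [fq_eq_zero]
    simp [Dt, h]
  intro i j h
  by_contra hne
  rcases lt_or_gt_of_ne hne with h' | h'
  · exact key _ _ h' h
  · exact key _ _ h' h.symm

/-- The line is the zero set. -/
lemma mem_line_iff {a b : E2} (hab : a ≠ b) (x : E2) : x ∈ lineThrough a b ↔ Dt a b x = 0 := by
  constructor
  · rintro ⟨t, rfl⟩
    simp only [Dt, PiLp.add_apply, PiLp.smul_apply, PiLp.sub_apply, smul_eq_mul]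
    ring
  · intro h
    by_cases h0 : b 0 - a 0 = 0
    · have h1 : b 1 - a 1 ≠ 0 := by
        intro h1
        apply hab
        ext i
        fin_cases i
        · simp; linarith
        · simp; linarith
      refine ⟨(x 1 - a 1) / (b 1 - a 1), ?_⟩
      ext i
      fin_cases i
      · simp only [Dt, h0] at h
        have : x 0 - a 0 = 0 := by
          have : (b 1 - a 1) * (x 0 - a 0) = 0 := by linarith
          simpa [h1] using this
        simp [h0]; linarith
      · simp; field_simp; ring
    · refine ⟨(x 0 - a 0) / (b 0 - a 0), ?_⟩
      simp only [Dt] at h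
      ext i
      fin_cases i
      · simp; field_simp; ring
      · simp; field_simp; linarith

lemma mem_lineq (hk : 4 ≤ k) (H : HH p) {q : Fin k × Fin k} (hq : q ∈ PP k) (x : E2) :
    x ∈ lineThrough (p q.1) (p q.2) ↔ fq p q x = 0 := by
  rw [fq_eq_zero, mem_line_iff]
  intro h
  rw [mem_PP] at hq
  exact hq.ne (inj_of_HH hk H h)

lemma lineThrough_comm (a b : E2) : lineThrough a b = lineThrough b a := by
  have : ∀ a b : E2, lineThrough a b ⊆ lineThrough b a := by
    rintro a b _ ⟨t, rfl⟩
    exact ⟨1 - t, by module⟩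
  exact (this a b).antisymm (this b a)

lemma linesOf_eq (p : Fin k → E2) :
    linesOf p = (fun q : Fin k × Fin k => lineThrough (p q.1) (p q.2)) '' (PP k : Set _) := by
  ext L
  constructor
  · rintro ⟨i, j, hij, rfl⟩
    rcases lt_or_gt_of_ne hij with h | h
    · exact ⟨(i, j), by simpa using h, rfl⟩
    · exact ⟨(j, i), by simpa using h, lineThrough_comm _ _⟩
  · rintro ⟨q, hq, rfl⟩
    exact ⟨q.1, q.2, (mem_PP.1 hq).ne, rfl⟩

lemma line_inj (hk : 4 ≤ k) (H : HH p) {q m : Fin k × Fin k} (hq : q ∈ PP k) (hm : m ∈ PP k)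
    (h : lineThrough (p q.1) (p q.2) = lineThrough (p m.1) (p m.2)) : q = m := by
  by_contra hne
  rcases not_both_zero H hq hm hne with h' | h'
  · rw [Ne, ← mem_lineq hk H hq, h, mem_lineq hk H hm] at h'
    exact h' (fq_left _)
  · rw [Ne, ← mem_lineq hk H hq, h, mem_lineq hk H hm] at h'
    exact h' (fq_right _)

lemma mem_free (hk : 4 ≤ k) (H : HH p) (x : E2) : x ∈ freePts p ↔ ∀ q ∈ PP k, fq p q x ≠ 0 := by
  simp only [freePts, linesOf_eq, mem_ofPred_eq, Set.forall_mem_image, Finset.mem_coe]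
  constructor
  · intro h q hq h0
    exact h hq ((mem_lineq hk H hq x).2 h0)
  · intro h q hq h0
    exact h q hq ((mem_lineq hk H hq x).1 h0)

end geo
section comb

lemma card_PP (k : ℕ) : (PP k).card = k.choose 2 := by
  have : (PP k).card = (Finset.powersetCard 2 (Finset.univ : Finset (Fin k))).card := by
    apply Finset.card_bij (fun q _ => ({q.1, q.2} : Finset (Fin k)))
    · intro q hq
      rw [mem_PP] at hq
      simp [Finset.mem_powersetCard, Finset.card_pair hq.ne]
    · intro q hq m hm h
      rw [mem_PP] at hq hm
      have h1 : q.1 ∈ ({m.1, m.2} : Finset (Fin k)) := by rw [← h]; simp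
      have h2 : q.2 ∈ ({m.1, m.2} : Finset (Fin k)) := by rw [← h]; simp
      simp only [Finset.mem_insert, Finset.mem_singleton] at h1 h2
      ext <;> omega
    · intro s hs
      rw [Finset.mem_powersetCard] at hs
      set e := s.orderEmbOfFin hs.2
      refine ⟨(e 0, e 1), ?_, ?_⟩
      · simp
      · have := Finset.image_orderEmbOfFin_univ s hs.2
        have u : (Finset.univ : Finset (Fin 2)) = {0, 1} := by decide
        rw [u, Finset.image_insert, Finset.image_singleton] at this
        exact this
  rw [this, Finset.card_powersetCard, Finset.card_univ, Fintype.card_fin]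

lemma card_XX (k : ℕ) : (((PP k) ×ˢ (PP k)).filter (fun x => XX x.1 x.2)).card = k.choose 4 := by
  have : (((PP k) ×ˢ (PP k)).filter (fun x => XX x.1 x.2)).card =
      (Finset.powersetCard 4 (Finset.univ : Finset (Fin k))).card := by
    apply Finset.card_bij (fun x _ => ({x.1.1, x.2.1, x.1.2, x.2.2} : Finset (Fin k)))
    · rintro ⟨⟨a, c⟩, ⟨b, d⟩⟩ hq
      simp only [Finset.mem_filter, Finset.mem_product, mem_PP] at hq
      obtain ⟨⟨h1, h2⟩, h3, h4, h5⟩ := hq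
      dsimp only at h1 h2 h3 h4 h5 ⊢
      rw [Finset.mem_powersetCard]
      refine ⟨Finset.subset_univ _, ?_⟩
      rw [Finset.card_insert_of_notMem, Finset.card_insert_of_notMem, Finset.card_pair]
      · omega
      · simp only [Finset.mem_insert, Finset.mem_singleton]; omega
      · simp only [Finset.mem_insert, Finset.mem_singleton]; omega
    · rintro ⟨⟨a, c⟩, ⟨b, d⟩⟩ hq ⟨⟨a', c'⟩, ⟨b', d'⟩⟩ hm h
      simp only [Finset.mem_filter, Finset.mem_product, mem_PP] at hq hm
      obtain ⟨_, h3, h4, h5⟩ := hq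
      obtain ⟨_, g3, g4, g5⟩ := hm
      dsimp only at h3 h4 h5 g3 g4 g5
      simp only at h
      have key : ∀ x, (x = a ∨ x = b ∨ x = c ∨ x = d) ↔ (x = a' ∨ x = b' ∨ x = c' ∨ x = d') := by
        intro x
        have := Finset.ext_iff.1 h x
        simpa only [Finset.mem_insert, Finset.mem_singleton] using this
      have ka := (key a).1 (by simp)
      have kb := (key b).1 (by simp)
      have kc := (key c).1 (by simp)
      have kd := (key d).1 (by simp)
      have ka' := (key a').2 (by simp)
      have kb' := (key b').2 (by simp)
      have kc' := (key c').2 (by simp)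
      have kd' := (key d').2 (by simp)
      clear key h
      have e1 : a = a' := by clear kb kc kd kb' kc' kd'; omega
      have e2 : b = b' := by clear ka kc kd ka' kc' kd'; omega
      have e3 : c = c' := by clear ka kb kd ka' kb' kd'; omega
      have e4 : d = d' := by clear ka kb kc ka' kb' kc'; omega
      rw [e1, e2, e3, e4]
    · intro s hs
      rw [Finset.mem_powersetCard] at hs
      set e := s.orderEmbOfFin hs.2
      have l1 : e 0 < e 1 := by simp
      have l2 : e 1 < e 2 := by simp
      have l3 : e 2 < e 3 := by simp
      refine ⟨((e 0, e 2), (e 1, e 3)), ?_, ?_⟩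
      · simp only [Finset.mem_filter, Finset.mem_product, mem_PP]
        exact ⟨⟨l1.trans l2, l2.trans l3⟩, l1, l2, l3⟩
      · have := Finset.image_orderEmbOfFin_univ s hs.2
        have u : (Finset.univ : Finset (Fin 4)) = {0, 1, 2, 3} := by decide
        rw [u, Finset.image_insert, Finset.image_insert, Finset.image_insert,
          Finset.image_singleton] at this
        exact this
  rw [this, Finset.card_powersetCard, Finset.card_univ, Fintype.card_fin]

def sideOf {k : ℕ} (hk : 4 ≤ k) (i : Fin k) : Fin k × Fin k :=
  if h : i.val + 1 < k then (i, ⟨i.val + 1, h⟩) else (⟨0, by omega⟩, ⟨k - 1, by omega⟩)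

lemma sideOf_mem {k : ℕ} (hk : 4 ≤ k) (i : Fin k) : sideOf hk i ∈ PP k := by
  unfold sideOf
  split_ifs
  · simp [Fin.lt_def]
  · simp [Fin.lt_def]; omega

lemma sideOf_side {k : ℕ} (hk : 4 ≤ k) (i : Fin k) : IsSide (sideOf hk i) := by
  unfold sideOf IsSide
  split_ifs
  · simp
  · simp; omega

lemma sideOf_inj {k : ℕ} (hk : 4 ≤ k) : Function.Injective (sideOf hk) := by
  intro i j h
  unfold sideOf at h
  split_ifs at h <;> simp only [Prod.mk.injEq, Fin.ext_iff] at h <;> omega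

lemma sideOf_surj {k : ℕ} (hk : 4 ≤ k) {q : Fin k × Fin k} (hs : IsSide q) :
    ∃ i, sideOf hk i = q := by
  rcases hs with h | h
  · refine ⟨q.1, ?_⟩
    unfold sideOf
    rw [dif_pos (by omega)]
    ext <;> simp [h]
  · refine ⟨q.2, ?_⟩
    unfold sideOf
    rw [dif_neg (by omega)]
    ext <;> simp <;> omega

lemma card_side {k : ℕ} (hk : 4 ≤ k) : ((PP k).filter (fun q => IsSide q)).card = k := by
  have : (PP k).filter (fun q => IsSide q) = Finset.univ.image (sideOf hk) := by
    ext q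
    simp only [Finset.mem_filter, Finset.mem_image, Finset.mem_univ, true_and]
    constructor
    · rintro ⟨_, h⟩; exact sideOf_surj hk h
    · rintro ⟨i, rfl⟩; exact ⟨sideOf_mem hk i, sideOf_side hk i⟩
  rw [this, Finset.card_image_of_injective _ (sideOf_inj hk)]
  simp

lemma card_diag {k : ℕ} (hk : 4 ≤ k) :
    ((PP k).filter (fun q => ¬ IsSide q)).card + k = k.choose 2 := by
  have := Finset.card_filter_add_card_filter_not (s := PP k) (fun q => IsSide q)
  rw [card_side hk, card_PP] at this
  omega

lemma card_insert_pairs {ι : Type*} [DecidableEq ι] (R : ι → ι → Prop) [DecidableRel R]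
    (F : Finset ι) (m : ι) (hm : m ∉ F) (h1 : ¬ R m m) (h2 : ∀ q, ¬ (R m q ∧ R q m)) :
    (((insert m F) ×ˢ (insert m F)).filter (fun x => R x.1 x.2)).card =
      ((F ×ˢ F).filter (fun x => R x.1 x.2)).card + (F.filter (fun q => R m q ∨ R q m)).card := by
  have : (F.filter (fun q => R m q ∨ R q m)).card =
      (F.filter (fun q => R m q)).card + (F.filter (fun q => R q m)).card := by
    rw [Finset.filter_or, Finset.card_union_of_disjoint]
    rw [Finset.disjoint_filter]
    intro q _ a b
    exact h2 q ⟨a, b⟩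
  rw [this]
  simp only [Finset.card_filter, Finset.sum_product, Finset.sum_insert hm, if_neg h1,
    Finset.sum_add_distrib]
  ring

end comb

section geo2
variable {k : ℕ} {p : Fin k → E2}

lemma IsAff.convex_nonneg {f : E2 → ℝ} (hf : IsAff f) : Convex ℝ {x | 0 ≤ f x} := by
  intro x hx y hy a b ha hb hab
  have h : a = 1 - b := by linarith
  have e : a • x + b • y = x + b • (y - x) := by subst h; module
  simp only [mem_ofPred_eq] at *
  rw [e, hf.line, ← h]
  positivity

lemma IsAff.convex_zero {f : E2 → ℝ} (hf : IsAff f) : Convex ℝ {x | f x = 0} := by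
  intro x hx y hy a b ha hb hab
  have h : a = 1 - b := by linarith
  have e : a • x + b • y = x + b • (y - x) := by subst h; module
  simp only [mem_ofPred_eq] at *
  rw [e, hf.line, hx, hy]
  ring

lemma hull_nonneg (H : HH p) {q : Fin k × Fin k} (hq : q ∈ PP k) (hs : IsSide q) {x : E2}
    (hx : x ∈ convexHull ℝ (Set.range p)) : 0 ≤ fq p q x := by
  have : convexHull ℝ (Set.range p) ⊆ {x | 0 ≤ fq p q x} := by
    apply convexHull_min _ (fq_aff p q).convex_nonneg
    rintro _ ⟨l, rfl⟩
    exact fq_side_nonneg H hq hs l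
  exact this hx

lemma tri_mem {a b c x : E2} (h : 0 < Dt a b c) (h1 : 0 ≤ Dt b c x) (h2 : Dt a c x ≤ 0)
    (h3 : 0 ≤ Dt a b x) {K : Set E2} (hK : Convex ℝ K) (ha : a ∈ K) (hb : b ∈ K) (hc : c ∈ K) :
    x ∈ K := by
  have hsum : Dt b c x + -Dt a c x + Dt a b x = Dt a b c := by simp only [Dt]; ring
  have := hK.sum_mem (t := Finset.univ) (w := ![Dt b c x / Dt a b c, -Dt a c x / Dt a b c,
    Dt a b x / Dt a b c]) (z := ![a, b, c]) ?_ ?_ ?_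
  · convert this using 1
    simp only [Fin.sum_univ_three, Matrix.cons_val_zero, Matrix.cons_val_one, Matrix.cons_val]
    ext i
    fin_cases i
    · simp
      field_simp
      simp only [Dt]; ring
    · simp
      field_simp
      simp only [Dt]; ring
  · intro i _
    fin_cases i
    · exact div_nonneg h1 h.le
    · exact div_nonneg (by linarith) h.le
    · exact div_nonneg h3 h.le
  · simp only [Fin.sum_univ_three, Matrix.cons_val_zero, Matrix.cons_val_one, Matrix.cons_val]
    rw [← add_div, ← add_div, hsum, div_self h.ne']
  · intro i _
    fin_cases i
    · exact ha
    · exact hb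
    · exact hc

lemma UU_sub_hull (hk : 4 ≤ k) (H : HH p) : UU p ⊆ convexHull ℝ (Set.range p) := by
  classical
  intro x hx
  have side1 : ∀ (n : ℕ) (h : n + 1 < k), 0 < Dt (p ⟨n, by omega⟩) (p ⟨n + 1, h⟩) x := by
    intro n h
    have := hx (⟨n, by omega⟩, ⟨n + 1, h⟩) (by simp [Fin.lt_def]) (by left; simp)
    unfold fq at this
    rwa [if_neg (by simp; omega)] at this
  have side2 : Dt (p ⟨0, by omega⟩) (p ⟨k - 1, by omega⟩) x < 0 := by
    have := hx (⟨0, by omega⟩, ⟨k - 1, by omega⟩) (by simp [Fin.lt_def]; omega)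
      (by right; simp; omega)
    unfold fq at this
    rw [if_pos (by simp; omega)] at this
    simpa using this
  have hex : ∃ n : ℕ, ∃ h : n < k, 1 ≤ n ∧ Dt (p ⟨0, by omega⟩) (p ⟨n, h⟩) x < 0 :=
    ⟨k - 1, by omega, by omega, side2⟩
  obtain ⟨hn, hn1, hn2⟩ := Nat.find_spec hex
  have hmin := fun m => Nat.find_min hex (m := m)
  generalize Nat.find hex = n at *
  have n1 : n ≠ 1 := by
    rintro rfl
    have := side1 0 (by omega)
    exact absurd hn2 this.not_gt
  obtain ⟨m, rfl⟩ : ∃ m, n = m + 1 := ⟨n - 1, by omega⟩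
  have hm := hmin m (by omega)
  push Not at hm
  have hm2 := hm (by omega) (by omega)
  have hs := side1 m hn
  have sub := subset_convexHull ℝ (Set.range p)
  exact tri_mem (H ⟨0, by omega⟩ ⟨m, by omega⟩ ⟨m + 1, hn⟩ (by simp [Fin.lt_def]; omega)
    (by simp [Fin.lt_def])) hs.le hn2.le hm2 (convex_convexHull ℝ _) (sub ⟨_, rfl⟩) (sub ⟨_, rfl⟩)
    (sub ⟨_, rfl⟩)

lemma line_U (hk : 4 ≤ k) (H : HH p) {x : E2} (hx : x ∈ UU p) {q : Fin k × Fin k}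
    (hq : q ∈ PP k) (h : fq p q x = 0) :
    ∃ t : ℝ, 0 < t ∧ t < 1 ∧ x = p q.1 + t • (p q.2 - p q.1) := by
  obtain ⟨t, rfl⟩ := (mem_lineq hk H hq x).2 h
  rw [mem_PP] at hq
  refine ⟨t, ?_, ?_, rfl⟩
  · have m1 : (q.1, (⟨q.1.val + 1, by omega⟩ : Fin k)) ∈ PP k := by simp [Fin.lt_def]
    have m2 : IsSide (q.1, (⟨q.1.val + 1, by omega⟩ : Fin k)) := by left; simp
    have := hx _ m1 m2
    rw [(fq_aff p _).line, fq_left (p := p) (q.1, (⟨q.1.val + 1, by omega⟩ : Fin k))] at this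
    have h2 := fq_side_nonneg H m1 m2 q.2
    by_contra! h0
    have := mul_nonneg (neg_nonneg.2 h0) h2
    linarith
  · have m1 : ((⟨q.2.val - 1, by omega⟩ : Fin k), q.2) ∈ PP k := by simp [Fin.lt_def]; omega
    have m2 : IsSide ((⟨q.2.val - 1, by omega⟩ : Fin k), q.2) := by left; simp; omega
    have := hx _ m1 m2
    rw [(fq_aff p _).line, fq_right (p := p) ((⟨q.2.val - 1, by omega⟩ : Fin k), q.2)] at this
    have h2 := fq_side_nonneg H m1 m2 q.1
    by_contra! h0
    have := mul_nonneg (sub_nonneg.2 h0) h2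
    linarith

lemma cross_ex (H : HH p) {m q : Fin k × Fin k} (hm : m ∈ PP k) (hq : q ∈ PP k) (h : XX m q) :
    ∃ x ∈ UU p, fq p m x = 0 ∧ fq p q x = 0 := by
  obtain ⟨h1, h2, h3⟩ := h
  have ms : ¬ IsSide m := by unfold IsSide; omega
  have qs : ¬ IsSide q := by unfold IsSide; omega
  have A : 0 < fq p q (p m.1) :=
    lt_of_le_of_ne (fq_out H hq (by omega)) (fq_ne H hq (by omega) (by omega)).symm
  have B : fq p q (p m.2) < 0 :=
    lt_of_le_of_ne (fq_in H hq qs (by omega)) (fq_ne H hq (by omega) (by omega))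
  have hd : 0 < fq p q (p m.1) - fq p q (p m.2) := by linarith
  refine ⟨p m.1 + (fq p q (p m.1) / (fq p q (p m.1) - fq p q (p m.2))) • (p m.2 - p m.1),
    diag_mem_U H hm ms (by positivity) (by rw [div_lt_one hd]; linarith), ?_, ?_⟩
  · rw [(fq_aff p m).line, fq_left, fq_right]; ring
  · rw [(fq_aff p q).line]; field_simp; ring

lemma cross_iff (hk : 4 ≤ k) (H : HH p) {m q : Fin k × Fin k} (hm : m ∈ PP k) (hq : q ∈ PP k)
    (hne : q ≠ m) :
    (∃ x ∈ UU p, fq p m x = 0 ∧ fq p q x = 0) ↔ (XX m q ∨ XX q m) := by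
  constructor
  · rintro ⟨x, hx, h1, h2⟩
    by_contra! h
    obtain ⟨t, t0, t1, rfl⟩ := line_U hk H hx hm h1
    have := seg_sign H hq hm hne h.2 h.1 t0 t1 t0 t1
    rw [h2] at this
    simp at this
  · rintro (h | h)
    · exact cross_ex H hm hq h
    · obtain ⟨x, hx, h1, h2⟩ := cross_ex H hq hm h
      exact ⟨x, hx, h2, h1⟩

def GG {k : ℕ} (p : Fin k → E2) : Prop :=
  ∀ x ∈ UU p, ∀ q ∈ PP k, ∀ m ∈ PP k, ∀ n ∈ PP k, q ≠ m → q ≠ n → m ≠ n →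
    fq p q x = 0 → fq p m x = 0 → fq p n x ≠ 0

lemma GG_of (hk : 4 ≤ k) (H : HH p) (hgen : ∀ x ∈ interior (convexHull ℝ (Set.range p)),
      {L ∈ linesOf p | x ∈ L}.ncard ≤ 2) : GG p := by
  intro x hx q hq m hm n hn h1 h2 h3 f1 f2 f3
  have hi : x ∈ interior (convexHull ℝ (Set.range p)) :=
    interior_maximal (UU_sub_hull hk H) UU_open hx
  have := hgen x hi
  have fin : (linesOf p).Finite := by
    rw [linesOf_eq]; exact (Finset.finite_toSet _).image _
  have sub : {lineThrough (p q.1) (p q.2), lineThrough (p m.1) (p m.2),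
      lineThrough (p n.1) (p n.2)} ⊆ {L ∈ linesOf p | x ∈ L} := by
    rintro L (rfl | rfl | rfl)
    · exact ⟨by rw [linesOf_eq]; exact ⟨q, hq, rfl⟩, (mem_lineq hk H hq x).2 f1⟩
    · exact ⟨by rw [linesOf_eq]; exact ⟨m, hm, rfl⟩, (mem_lineq hk H hm x).2 f2⟩
    · exact ⟨by rw [linesOf_eq]; exact ⟨n, hn, rfl⟩, (mem_lineq hk H hn x).2 f3⟩
  have h := Set.ncard_le_ncard sub (fin.subset (Set.sep_subset _ _))
  rw [Set.ncard_eq_three.2 ⟨_, _, _, fun h => h1 (line_inj hk H hq hm h),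
    fun h => h2 (line_inj hk H hq hn h), fun h => h3 (line_inj hk H hm hn h), rfl⟩] at h
  omega

lemma cells_empty {ι : Type*} (f : ι → E2 → ℝ) (F : Finset ι) : cells f ∅ F = ∅ := by
  ext T; simp [cells]

lemma cells_nil {ι : Type*} (f : ι → E2 → ℝ) {V : Set E2} (hV : V.Nonempty) :
    (cells f V ∅).ncard = 1 := by
  rw [Set.ncard_eq_one]
  refine ⟨∅, ?_⟩
  ext T
  obtain ⟨x, hx⟩ := hV
  simp only [cells, mem_ofPred_eq, mem_singleton_iff]
  constructor
  · rintro ⟨_, _, _, h⟩; simpa using h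
  · rintro rfl; exact ⟨x, hx, by simp, by simp⟩

lemma count1 (hk : 4 ≤ k) (H : HH p) (G : GG p) {m : Fin k × Fin k} (hm : m ∈ PP k)
    (hs : ¬ IsSide m) (F : Finset (Fin k × Fin k)) (hF : F ⊆ PP k) (hmF : m ∉ F) :
    (cells (fq p) (UU p ∩ {x | fq p m x = 0}) F).ncard =
      1 + (F.filter (fun q => XX m q ∨ XX q m)).card := by
  classical
  induction F using Finset.induction_on with
  | empty =>
    rw [cells_nil]
    · simp
    · refine ⟨p m.1 + (1/2 : ℝ) • (p m.2 - p m.1), diag_mem_U H hm hs (by norm_num) (by norm_num),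
        ?_⟩
      simp only [mem_ofPred_eq]
      rw [(fq_aff p m).line, fq_left, fq_right]; ring
  | insert q F hqF ih =>
    have hq : q ∈ PP k := hF (Finset.mem_insert_self _ _)
    have hF' : F ⊆ PP k := fun i hi => hF (Finset.mem_insert_of_mem hi)
    have hmF' : m ∉ F := fun h => hmF (Finset.mem_insert_of_mem h)
    have hqm : q ≠ m := by rintro rfl; exact hmF (Finset.mem_insert_self _ _)
    rw [del_res (fq_aff p) (UU_convex.inter (fq_aff p m).convex_zero) hqF, ih hF' hmF',
      Finset.filter_insert]
    · by_cases hX : XX m q ∨ XX q m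
      · rw [if_pos hX, Finset.card_insert_of_notMem (by simp [hqF])]
        obtain ⟨x, hxU, x1, x2⟩ := (cross_iff hk H hm hq hqm).2 hX
        have : (cells (fq p) (UU p ∩ {x | fq p m x = 0} ∩ {x | fq p q x = 0}) F).ncard = 1 := by
          rw [Set.ncard_eq_one]
          refine ⟨F.filter (fun i => 0 < fq p i x), ?_⟩
          ext T
          rw [mem_singleton_iff]
          constructor
          · rintro ⟨y, ⟨⟨hyU, y1⟩, y2⟩, hy, rfl⟩
            simp only [mem_ofPred_eq] at y1 y2
            have : x = y := by
              obtain ⟨t, -, -, rfl⟩ := line_U hk H hxU hm x1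
              obtain ⟨s, -, -, rfl⟩ := line_U hk H hyU hm y1
              rw [(fq_aff p q).line] at x2 y2
              have hst : (s - t) * (fq p q (p m.2) - fq p q (p m.1)) = 0 := by linarith
              rcases mul_eq_zero.1 hst with h | h
              · rw [sub_eq_zero.1 h]
              · exfalso
                have e : fq p q (p m.2) = fq p q (p m.1) := by linarith
                rw [e] at x2
                have e1 : fq p q (p m.1) = 0 := by linarith
                rcases not_both_zero H hq hm hqm with h | h
                · exact h e1
                · exact h (e.trans e1)
            rw [this]
          · rintro rfl
            refine ⟨x, ⟨⟨hxU, x1⟩, x2⟩, ?_, by congr!⟩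
            intro i hi
            exact G x hxU m hm q hq i (hF' hi) hqm.symm (by rintro rfl; exact hmF' hi)
              (by rintro rfl; exact hqF hi) x1 x2
        rw [this]
        ring
      · rw [if_neg hX]
        have : UU p ∩ {x | fq p m x = 0} ∩ {x | fq p q x = 0} = ∅ := by
          ext x
          simp only [mem_inter_iff, mem_ofPred_eq, mem_empty_iff_false, iff_false]
          rintro ⟨⟨a, b⟩, c⟩
          exact hX ((cross_iff hk H hm hq hqm).1 ⟨x, a, b, c⟩)
        rw [this, cells_empty]
        simp
    · rintro z ⟨hzU, hz⟩ hz'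
      have ev : ∀ w : E2, fq p m w = 0 →
          ∀ᶠ t in 𝓝 (0:ℝ), z + t • (w - z) ∈ UU p ∩ {x | fq p m x = 0} := by
        intro w hw
        filter_upwards [(tendsto_line z w).eventually (UU_open.mem_nhds hzU)] with t ht
        refine ⟨ht, ?_⟩
        simp only [mem_ofPred_eq] at hz ⊢
        rw [(fq_aff p m).line, hz, hw]; ring
      rcases not_both_zero H hq hm hqm with h | h
      · exact ⟨_, h, ev _ (fq_left _)⟩
      · exact ⟨_, h, ev _ (fq_right _)⟩

lemma exists_third (hk : 4 ≤ k) (i j : Fin k) : ∃ l : Fin k, l ≠ i ∧ l ≠ j := by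
  obtain ⟨l, hl⟩ := Finset.exists_mem_notMem_of_card_lt_card (s := ({i, j} : Finset (Fin k)))
    (t := Finset.univ) (by
      have := Finset.card_le_two (a := i) (b := j)
      simp only [Finset.card_univ, Fintype.card_fin]
      omega)
  exact ⟨l, by simpa using hl⟩

lemma UU_nonempty (hk : 4 ≤ k) (H : HH p) : (UU p).Nonempty := by
  refine ⟨_, diag_mem_U H (m := (⟨0, by omega⟩, ⟨2, by omega⟩)) (by simp [Fin.lt_def])
    (by unfold IsSide; simp; omega) (t := 1/2) (by norm_num) (by norm_num)⟩

lemma count2 (hk : 4 ≤ k) (H : HH p) (G : GG p) (F : Finset (Fin k × Fin k)) (hF : F ⊆ PP k) :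
    (cells (fq p) (UU p) F).ncard =
      1 + (F.filter (fun q => ¬ IsSide q)).card + ((F ×ˢ F).filter (fun x => XX x.1 x.2)).card := by
  classical
  induction F using Finset.induction_on with
  | empty =>
    rw [cells_nil _ (UU_nonempty hk H)]
    simp
  | insert m F hmF ih =>
    have hm : m ∈ PP k := hF (Finset.mem_insert_self _ _)
    have hF' : F ⊆ PP k := fun i hi => hF (Finset.mem_insert_of_mem hi)
    rw [del_res (fq_aff p) UU_convex hmF, ih hF', card_insert_pairs _ _ _ hmF, Finset.filter_insert]
    · by_cases hs : IsSide m
      · rw [if_neg (by simpa using hs)]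
        have e1 : UU p ∩ {x | fq p m x = 0} = ∅ := by
          ext x
          simp only [mem_inter_iff, mem_ofPred_eq, mem_empty_iff_false, iff_false]
          rintro ⟨a, b⟩
          exact (a m hm hs).ne' b
        have e2 : F.filter (fun q => XX m q ∨ XX q m) = ∅ := by
          rw [Finset.filter_eq_empty_iff]
          intro q hq
          have := side_not_X hs (hF' hq)
          tauto
        rw [e1, e2, cells_empty]
        simp
      · rw [if_pos hs, count1 hk H G hm hs F hF' hmF,
          Finset.card_insert_of_notMem (by simp [hmF])]
        ring
    · unfold XX; omega
    · intro q; unfold XX; omega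
    · intro z hz _
      obtain ⟨l, h1, h2⟩ := exists_third hk m.1 m.2
      exact ⟨p l, fq_ne H hm h1 h2, (tendsto_line z _).eventually (UU_open.mem_nhds hz)⟩

end geo2
section chambers
variable {k : ℕ} {p : Fin k → E2}

def cellAt {k : ℕ} (p : Fin k → E2) (y : E2) : Set E2 := {x | ∀ q ∈ PP k, 0 < fq p q x * fq p q y}

def Free {k : ℕ} (p : Fin k → E2) (y : E2) : Prop := ∀ q ∈ PP k, fq p q y ≠ 0

lemma self_mem {y : E2} (hy : Free p y) : y ∈ cellAt p y := fun q hq => mul_self_pos.2 (hy q hq)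

lemma cellAt_free {x y : E2} (hx : x ∈ cellAt p y) : Free p x := by
  intro q hq h
  have := hx q hq
  rw [h] at this
  simp at this

lemma cellAt_convex (y : E2) : Convex ℝ (cellAt p y) := by
  intro x hx z hz a b ha hb hab q hq
  have h : a = 1 - b := by linarith
  have e : a • x + b • z = x + b • (z - x) := by subst h; module
  rw [e, (fq_aff p q).line, ← h]
  have h1 := hx q hq
  have h2 := hz q hq
  have e2 : (a * fq p q x + b * fq p q z) * fq p q y =
    a * (fq p q x * fq p q y) + b * (fq p q z * fq p q y) := by ring
  rw [e2]
  rcases ha.eq_or_lt with h' | h'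
  · have : b = 1 := by linarith
    subst this; subst h'; simpa using h2
  · positivity

lemma comp_eq (hk : 4 ≤ k) (H : HH p) {y : E2} (hy : Free p y) :
    connectedComponentIn (freePts p) y = cellAt p y := by
  have hyF : y ∈ freePts p := (mem_free hk H y).2 hy
  apply Subset.antisymm
  · intro z hz q hq
    have hsub := connectedComponentIn_subset (freePts p) y
    have hzF : fq p q z ≠ 0 := (mem_free hk H z).1 (hsub hz) q hq
    by_contra! h
    have h2 : 0 < fq p q y * fq p q y := mul_self_pos.2 (hy q hq)
    have hc : ContinuousOn (fun w => fq p q w * fq p q y) (connectedComponentIn (freePts p) y) :=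
      ((fq_aff p q).cont.mul continuous_const).continuousOn
    obtain ⟨w, hw, hw0⟩ := isPreconnected_connectedComponentIn.intermediate_value hz
      (mem_connectedComponentIn hyF) hc ⟨h, h2.le⟩
    rcases mul_eq_zero.1 hw0 with h' | h'
    · exact (mem_free hk H w).1 (hsub hw) q hq h'
    · exact hy q hq h'
  · apply (cellAt_convex y).isPreconnected.subset_connectedComponentIn (self_mem hy)
    intro z hz
    exact (mem_free hk H z).2 (cellAt_free hz)

lemma mem_chambers (hk : 4 ≤ k) (H : HH p) (C : Set E2) :
    C ∈ chambersOf p ↔ ∃ y, Free p y ∧ C = cellAt p y := by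
  constructor
  · rintro ⟨y, hy, rfl⟩
    have hy' : Free p y := (mem_free hk H y).1 hy
    exact ⟨y, hy', comp_eq hk H hy'⟩
  · rintro ⟨y, hy, rfl⟩
    exact ⟨y, (mem_free hk H y).2 hy, (comp_eq hk H hy).symm⟩

lemma cellAt_sub_U {y : E2} (hy : y ∈ UU p) : cellAt p y ⊆ UU p := by
  intro x hx q hq hs
  exact pos_of_mul_pos_left (hx q hq) (hy q hq hs).le

def SS {k : ℕ} (p : Fin k → E2) : Set (Set E2) :=
  {C ∈ chambersOf p | C ⊆ convexHull ℝ (Set.range p)}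

lemma hull_free_U (H : HH p) {y : E2} (hy : Free p y) (h : y ∈ convexHull ℝ (Set.range p)) :
    y ∈ UU p := fun q hq hs => lt_of_le_of_ne (hull_nonneg H hq hs h) (hy q hq).symm

lemma mem_SS (hk : 4 ≤ k) (H : HH p) (C : Set E2) :
    C ∈ SS p ↔ ∃ y ∈ UU p, Free p y ∧ C = cellAt p y := by
  constructor
  · rintro ⟨hC, hs⟩
    obtain ⟨y, hy, rfl⟩ := (mem_chambers hk H C).1 hC
    exact ⟨y, hull_free_U H hy (hs (self_mem hy)), hy, rfl⟩
  · rintro ⟨y, hyU, hy, rfl⟩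
    exact ⟨(mem_chambers hk H _).2 ⟨y, hy, rfl⟩, (cellAt_sub_U hyU).trans (UU_sub_hull hk H)⟩

lemma card_SS (hk : 4 ≤ k) (H : HH p) (G : GG p) :
    (SS p).ncard = k.choose 4 + k.choose 2 - k + 1 := by
  classical
  set Ψ : Finset (Fin k × Fin k) → Set E2 := fun T =>
    {x | Free p x ∧ (PP k).filter (fun q => 0 < fq p q x) = T} with hΨ
  have h1 : ∀ y, Free p y → Ψ ((PP k).filter (fun q => 0 < fq p q y)) = cellAt p y := by
    intro y hy
    ext x
    constructor
    · rintro ⟨hx, h⟩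
      exact of_filter_eq hx hy h
    · intro hx
      exact ⟨cellAt_free hx, (filter_eq_of hx).2⟩
  have h2 : SS p = Ψ '' (cells (fq p) (UU p) (PP k)) := by
    ext C
    rw [mem_SS hk H]
    constructor
    · rintro ⟨y, hyU, hy, rfl⟩
      exact ⟨_, ⟨y, hyU, hy, rfl⟩, by rw [← h1 y hy]⟩
    · rintro ⟨_, ⟨y, hyU, hy, rfl⟩, rfl⟩
      exact ⟨y, hyU, hy, by rw [← h1 y hy]⟩
  have h3 : InjOn Ψ (cells (fq p) (UU p) (PP k)) := by
    rintro T ⟨y, hyU, hy, hT⟩ T' _ h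
    have m : y ∈ Ψ T := ⟨hy, by rw [hT]⟩
    rw [h] at m
    rw [hT, ← m.2]
  rw [h2, h3.ncard_image, count2 hk H G _ (Finset.Subset.refl _), card_XX]
  have := card_diag hk
  omega

lemma cellAt_eq {x y : E2} (hx : x ∈ cellAt p y) : cellAt p x = cellAt p y := by
  ext z
  have key : ∀ q ∈ PP k, 0 < fq p q x * fq p q y := hx
  constructor
  · intro hz q hq
    have a := mul_pos (hz q hq) (key q hq)
    have b : 0 < fq p q x * fq p q x := mul_self_pos.2 (cellAt_free hx q hq)
    have : fq p q z * fq p q x * (fq p q x * fq p q y) =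
      (fq p q x * fq p q x) * (fq p q z * fq p q y) := by ring
    rw [this] at a
    exact pos_of_mul_pos_right a b.le
  · intro hz q hq
    have a := mul_pos (hz q hq) (key q hq)
    have hy : fq p q y ≠ 0 := by
      intro h
      have := key q hq
      rw [h] at this; simp at this
    have b : 0 < fq p q y * fq p q y := mul_self_pos.2 hy
    have : fq p q z * fq p q y * (fq p q x * fq p q y) =
      (fq p q y * fq p q y) * (fq p q z * fq p q x) := by ring
    rw [this] at a
    exact pos_of_mul_pos_right a b.le

def mu {k : ℕ} (p : Fin k → E2) (q : Fin k × Fin k) : E2 := p q.1 + (1/2 : ℝ) • (p q.2 - p q.1)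

/-- `e = 1` inner chamber, `e = -1` outer chamber at a side -/
def Sd {k : ℕ} (p : Fin k → E2) (e : ℝ) (q : Fin k × Fin k) : Set E2 :=
  {x | 0 < e * fq p q x ∧ ∀ m ∈ PP k, m ≠ q → 0 < fq p m x * fq p m (mu p q)}

lemma mu_sq (H : HH p) {q m : Fin k × Fin k} (hq : q ∈ PP k) (hs : IsSide q) (hm : m ∈ PP k)
    (hne : m ≠ q) : fq p m (mu p q) ≠ 0 := by
  have h := side_not_X hs hm
  have := seg_sign H hm hq hne h.1 h.2 (s := 1/2) (t := 1/2) (by norm_num) (by norm_num)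
    (by norm_num) (by norm_num)
  intro h0
  unfold mu at h0
  rw [h0] at this
  simp at this

lemma mu_zero (q : Fin k × Fin k) : fq p q (mu p q) = 0 := by
  unfold mu
  rw [(fq_aff p q).line, fq_left, fq_right]; ring

lemma same_sign_trans {a b c : ℝ} (h1 : 0 < a * c) (h2 : 0 < b * c) : 0 < a * b := by
  have a1 := mul_pos h1 h2
  have hc : c ≠ 0 := by rintro rfl; simp at h1
  have b1 : 0 < c * c := mul_self_pos.2 hc
  have : a * c * (b * c) = (c * c) * (a * b) := by ring
  rw [this] at a1
  exact pos_of_mul_pos_right a1 b1.le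

lemma Sd_free {e : ℝ} {q : Fin k × Fin k} {x : E2} (hx : x ∈ Sd p e q) : Free p x := by
  intro m hm h
  by_cases hmq : m = q
  · subst hmq
    have := hx.1
    rw [h] at this; simp at this
  · have := hx.2 m hm hmq
    rw [h] at this; simp at this

lemma Sd_eq {e : ℝ} {q : Fin k × Fin k} (hq : q ∈ PP k) {x : E2} (hx : x ∈ Sd p e q) :
    Sd p e q = cellAt p x := by
  ext z
  constructor
  · intro hz m hm
    by_cases hmq : m = q
    · subst hmq
      exact same_sign_trans (c := e) (by linarith [hz.1]) (by linarith [hx.1])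
    · exact same_sign_trans (hz.2 m hm hmq) (hx.2 m hm hmq)
  · intro hz
    refine ⟨?_, fun m hm hmq => ?_⟩
    · exact same_sign_trans (c := fq p q x) hx.1 (hz q hq)
    · exact same_sign_trans (c := fq p m x) (hz m hm) (by linarith [hx.2 m hm hmq])

lemma mu_closure (hk : 4 ≤ k) (H : HH p) {q : Fin k × Fin k} (hq : q ∈ PP k) (hs : IsSide q)
    {e : ℝ} (he : e ≠ 0) : mu p q ∈ closure (Sd p e q) := by
  obtain ⟨l, h1, h2⟩ := exists_third hk q.1 q.2
  have hl := fq_side_pos H hq hs h1 h2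
  have ev := sign_stable (fq_aff p) ((PP k).erase q) (mu p q) (p l) (fun m hm =>
    mu_sq H hq hs (Finset.mem_of_mem_erase hm) (Finset.ne_of_mem_erase hm))
  have T : Filter.Tendsto (fun t : ℝ => e * t) (𝓝[>] 0) (𝓝 0) := by
    have : Continuous (fun t : ℝ => e * t) := by fun_prop
    have h := this.tendsto 0
    rw [mul_zero] at h
    exact h.mono_left nhdsWithin_le_nhds
  apply mem_closure_of_tendsto ((tendsto_line (mu p q) (p l)).comp T)
  filter_upwards [T.eventually ev, self_mem_nhdsWithin] with t ht ht0
  refine ⟨?_, fun m hm hmq => ?_⟩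
  · simp only [Function.comp]
    rw [(fq_aff p q).line, mu_zero]
    have : e * ((1 - e * t) * 0 + e * t * fq p q (p l)) = (e * e) * (t * fq p q (p l)) := by ring
    rw [this]
    exact mul_pos (mul_self_pos.2 he) (mul_pos ht0 hl)
  · have := ht m (Finset.mem_erase.2 ⟨hmq, hm⟩)
    simp only [Function.comp]
    linarith

lemma Sd_nonempty (hk : 4 ≤ k) (H : HH p) {q : Fin k × Fin k} (hq : q ∈ PP k) (hs : IsSide q)
    {e : ℝ} (he : e ≠ 0) : (Sd p e q).Nonempty :=
  closure_nonempty_iff.1 ⟨_, mu_closure hk H hq hs he⟩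

lemma two_sides (hk : 4 ≤ k) (e : Fin k) (m : Fin k × Fin k) :
    ∃ n ∈ PP k, IsSide n ∧ n ≠ m ∧ fq p n (p e) = 0 := by
  have a1 : fq p (sideOf hk e) (p e) = 0 := by
    unfold sideOf
    split_ifs with h
    · exact fq_left (p := p) (e, ⟨e.val + 1, h⟩)
    · have : e = ⟨k - 1, by omega⟩ := by ext; simp; omega
      have h2 := fq_right (p := p) (⟨0, by omega⟩, ⟨k - 1, by omega⟩)
      have h3 : p e = p ⟨k - 1, by omega⟩ := congrArg p this
      rw [h3]; exact h2
  obtain ⟨d, hd, a2⟩ : ∃ d : Fin k, d ≠ e ∧ fq p (sideOf hk d) (p e) = 0 := by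
    by_cases he : e.val = 0
    · refine ⟨⟨k - 1, by omega⟩, by rw [Ne, Fin.ext_iff]; simp; omega, ?_⟩
      unfold sideOf
      rw [dif_neg (by simp; omega)]
      have : e = ⟨0, by omega⟩ := by ext; simp; omega
      have h2 := fq_left (p := p) (⟨0, by omega⟩, ⟨k - 1, by omega⟩)
      rw [this]; exact h2
    · refine ⟨⟨e.val - 1, by omega⟩, by rw [Ne, Fin.ext_iff]; simp; omega, ?_⟩
      unfold sideOf
      rw [dif_pos (by simp; omega)]
      have : (⟨e.val - 1 + 1, by omega⟩ : Fin k) = e := by ext; simp; omega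
      have h2 := fq_right (p := p) (⟨e.val - 1, by omega⟩, ⟨e.val - 1 + 1, by omega⟩)
      simp only [this] at h2 ⊢
      exact h2
  by_cases h : sideOf hk e = m
  · refine ⟨sideOf hk d, sideOf_mem hk d, sideOf_side hk d, ?_, a2⟩
    rw [← h]
    exact fun h' => hd (sideOf_inj hk h')
  · exact ⟨sideOf hk e, sideOf_mem hk e, sideOf_side hk e, h, a1⟩

lemma closure_sign {x y : E2} (hx : x ∈ closure (cellAt p y)) {n : Fin k × Fin k} (hn : n ∈ PP k)
    (h0 : fq p n x ≠ 0) (hy : Free p y) : 0 < fq p n x * fq p n y := by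
  have hc : IsClosed {z | 0 ≤ fq p n z * fq p n y} :=
    isClosed_le continuous_const ((fq_aff p n).cont.mul continuous_const)
  have : closure (cellAt p y) ⊆ {z | 0 ≤ fq p n z * fq p n y} :=
    closure_minimal (fun z hz => (hz n hn).le) hc
  exact lt_of_le_of_ne (this hx) (mul_ne_zero h0 (hy n hn)).symm

lemma boundary_eq (hk : 4 ≤ k) (H : HH p) :
    edgeBoundaryOf p (SS p) =
      Set.range (fun i => (Sd p 1 (sideOf hk i), Sd p (-1) (sideOf hk i))) := by
  ext ⟨C, C'⟩
  constructor
  · rintro ⟨hC, hC', -, hCc', hne, x, hx, hx', L, ⟨hL, hxL⟩, huniq⟩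
    simp only at hC hC' hCc' hne hx hx'
    obtain ⟨y, hyU, hy, rfl⟩ := (mem_SS hk H C).1 hC
    obtain ⟨y', hy', rfl⟩ := (mem_chambers hk H C').1 hCc'
    rw [linesOf_eq] at hL
    obtain ⟨m, hm, rfl⟩ := hL
    simp only at hxL huniq
    have hm' : m ∈ PP k := hm
    have hx0 : fq p m x = 0 := (mem_lineq hk H hm' x).1 hxL
    have hxn : ∀ n ∈ PP k, n ≠ m → fq p n x ≠ 0 := by
      intro n hn hnm h0
      have := huniq (lineThrough (p n.1) (p n.2))
        ⟨by rw [linesOf_eq]; exact ⟨n, hn, rfl⟩, (mem_lineq hk H hn x).2 h0⟩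
      exact hnm (line_inj hk H hn hm' this)
    have s1 : ∀ n ∈ PP k, n ≠ m → 0 < fq p n x * fq p n y := fun n hn hnm =>
      closure_sign hx hn (hxn n hn hnm) hy
    have s2 : ∀ n ∈ PP k, n ≠ m → 0 < fq p n x * fq p n y' := fun n hn hnm =>
      closure_sign hx' hn (hxn n hn hnm) hy'
    have s3 : ∀ n ∈ PP k, n ≠ m → 0 < fq p n y * fq p n y' := fun n hn hnm =>
      same_sign_trans (c := fq p n x) (by linarith [s1 n hn hnm]) (by linarith [s2 n hn hnm])
    have hside : IsSide m := by
      by_contra hs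
      apply hC'
      refine (mem_SS hk H _).2 ⟨y', fun n hn hns => ?_, hy', rfl⟩
      have hnm : n ≠ m := by rintro rfl; exact hs hns
      exact pos_of_mul_pos_right (s3 n hn hnm) (hyU n hn hns).le
    have hmy : 0 < fq p m y := hyU m hm' hside
    have hmy' : fq p m y' < 0 := by
      by_contra! h
      have h' : 0 < fq p m y' := lt_of_le_of_ne h (hy' m hm').symm
      apply hne
      apply cellAt_eq
      intro n hn
      by_cases hnm : n = m
      · subst hnm; exact mul_pos hmy h'
      · exact s3 n hn hnm
    obtain ⟨t, rfl⟩ := hxL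
    have pos : ∀ n ∈ PP k, n ≠ m → IsSide n → 0 < fq p n (p m.1 + t • (p m.2 - p m.1)) :=
      fun n hn hnm hns => pos_of_mul_pos_left (s1 n hn hnm) (hyU n hn hns).le
    have t0 : 0 < t := by
      obtain ⟨n, hn, hns, hnm, h0⟩ := two_sides (p := p) hk m.1 m
      have := pos n hn hnm hns
      rw [(fq_aff p n).line, h0] at this
      by_contra! h
      have := mul_nonneg (neg_nonneg.2 h) (fq_side_nonneg H hn hns m.2)
      linarith
    have t1 : t < 1 := by
      obtain ⟨n, hn, hns, hnm, h0⟩ := two_sides (p := p) hk m.2 m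
      have := pos n hn hnm hns
      rw [(fq_aff p n).line, h0] at this
      by_contra! h
      have := mul_nonneg (sub_nonneg.2 h) (fq_side_nonneg H hn hns m.1)
      linarith
    have s4 : ∀ n ∈ PP k, n ≠ m → 0 < fq p n (mu p m) * fq p n (p m.1 + t • (p m.2 - p m.1)) := by
      intro n hn hnm
      have h := side_not_X hside hn
      exact seg_sign H hn hm' hnm h.1 h.2 (by norm_num) (by norm_num) t0 t1
    obtain ⟨i, hi⟩ := sideOf_surj hk hside
    refine ⟨i, ?_⟩
    simp only [hi]
    have y1 : y ∈ Sd p 1 m := ⟨by simpa using hmy, fun n hn hnm =>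
      same_sign_trans (by linarith [s1 n hn hnm]) (s4 n hn hnm)⟩
    have y2 : y' ∈ Sd p (-1) m := ⟨by linarith, fun n hn hnm =>
      same_sign_trans (by linarith [s2 n hn hnm]) (s4 n hn hnm)⟩
    rw [Sd_eq hm' y1, Sd_eq hm' y2]
  · rintro ⟨i, hi⟩
    simp only [Prod.mk.injEq] at hi
    obtain ⟨rfl, rfl⟩ := hi
    set q := sideOf hk i
    have hq : q ∈ PP k := sideOf_mem hk i
    have hs : IsSide q := sideOf_side hk i
    obtain ⟨y, hy⟩ := Sd_nonempty hk H hq hs (e := 1) one_ne_zero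
    obtain ⟨y', hy'⟩ := Sd_nonempty hk H hq hs (e := -1) (by norm_num)
    have hyU : y ∈ UU p := by
      intro m hm hms
      by_cases hmq : m = q
      · subst hmq; simpa using hy.1
      · have h1 := hy.2 m hm hmq
        have h2 : 0 ≤ fq p m (mu p q) := by
          unfold mu
          rw [(fq_aff p m).line]
          have a := fq_side_nonneg H hm hms q.1
          have b := fq_side_nonneg H hm hms q.2
          norm_num
          positivity
        exact pos_of_mul_pos_left h1 h2
    have c1 : Sd p 1 q ∈ SS p := (mem_SS hk H _).2 ⟨y, hyU, Sd_free hy, Sd_eq hq hy⟩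
    have c2 : Sd p (-1) q ∉ SS p := by
      intro h
      have := hull_nonneg H hq hs (h.2 hy')
      have := hy'.1
      linarith
    refine ⟨c1, c2, c1.1, (mem_chambers hk H _).2 ⟨y', Sd_free hy', Sd_eq hq hy'⟩, ?_,
      mu p q, mu_closure hk H hq hs one_ne_zero, mu_closure hk H hq hs (by norm_num),
      lineThrough (p q.1) (p q.2), ⟨?_, (mem_lineq hk H hq _).2 (mu_zero q)⟩, ?_⟩
    · intro h
      have h' : Sd p 1 q = Sd p (-1) q := h
      rw [h'] at c1
      exact c2 c1
    · rw [linesOf_eq]; exact ⟨q, hq, rfl⟩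
    · rintro L ⟨hL, hxL⟩
      rw [linesOf_eq] at hL
      obtain ⟨m, hm, rfl⟩ := hL
      have hm' : m ∈ PP k := hm
      have h0 := (mem_lineq hk H hm' _).1 hxL
      by_cases hmq : m = q
      · rw [hmq]
      · exact absurd h0 (mu_sq H hq hs hm' hmq)

lemma card_boundary (hk : 4 ≤ k) (H : HH p) : (edgeBoundaryOf p (SS p)).ncard = k := by
  rw [boundary_eq hk H, ← Set.image_univ, Set.InjOn.ncard_image, Set.ncard_univ, Nat.card_fin]
  intro i _ j _ h
  by_contra hij
  simp only [Prod.mk.injEq] at h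
  have hne : sideOf hk i ≠ sideOf hk j := fun h' => hij (sideOf_inj hk h')
  have hi := sideOf_mem hk i
  obtain ⟨y, hy⟩ := Sd_nonempty hk H hi (sideOf_side hk i) (e := 1) one_ne_zero
  obtain ⟨y', hy'⟩ := Sd_nonempty hk H hi (sideOf_side hk i) (e := -1) (by norm_num)
  have a1 := hy.1
  have a2 := hy'.1
  rw [h.1] at hy
  rw [h.2] at hy'
  have := same_sign_trans (hy.2 _ hi hne) (hy'.2 _ hi hne)
  have a3 : 0 < fq p (sideOf hk i) y := by linarith
  have a4 := pos_of_mul_pos_right this a3.le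
  linarith

end chambers

lemma linesOf_perm {k : ℕ} (p : Fin k → E2) (σ : Equiv.Perm (Fin k)) :
    linesOf (p ∘ σ) = linesOf p := by
  ext L
  constructor
  · rintro ⟨i, j, hij, rfl⟩
    exact ⟨σ i, σ j, by simpa using hij, rfl⟩
  · rintro ⟨i, j, hij, rfl⟩
    exact ⟨σ.symm i, σ.symm j, by simpa using hij, by simp⟩

lemma freePts_perm {k : ℕ} (p : Fin k → E2) (σ : Equiv.Perm (Fin k)) :
    freePts (p ∘ σ) = freePts p := by
  unfold freePts; rw [linesOf_perm]

lemma chambersOf_perm {k : ℕ} (p : Fin k → E2) (σ : Equiv.Perm (Fin k)) :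
    chambersOf (p ∘ σ) = chambersOf p := by
  unfold chambersOf; rw [freePts_perm]

lemma edge_perm {k : ℕ} (p : Fin k → E2) (σ : Equiv.Perm (Fin k)) (S : Set (Set E2)) :
    edgeBoundaryOf (p ∘ σ) S = edgeBoundaryOf p S := by
  unfold edgeBoundaryOf AdjOf; rw [linesOf_perm, chambersOf_perm]

/-- Let `k ≥ 4` points lie on a circle in convex position, such
that no three of the lines through pairs of them meet at a common point interior to
the polygon `P = conv{p₁,…,p_k}`.  For the (non-general-position) arrangement `𝓗` of
all `C(k,2)` lines through pairs, the set `S` of chambers contained in `P` satisfies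
`|S| = C(k,4) + C(k,2) − k + 1` and `|∂S| = k`; in particular
`|∂S| = Θ(|S|^{1/4})`. -/
theorem stmt18 (k : ℕ) (hk : 4 ≤ k) (p : Fin k → EuclideanSpace ℝ (Fin 2))
    (o : EuclideanSpace ℝ (Fin 2)) (r : ℝ) (hr : 0 < r)
    (hcirc : ∀ i, dist (p i) o = r)
    (hconv : ∀ i : Fin k, p i ∉ convexHull ℝ (p '' {j | j ≠ i}))
    (hgen : ∀ x ∈ interior (convexHull ℝ (Set.range p)),
      {L ∈ linesOf p | x ∈ L}.ncard ≤ 2) :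
    {C ∈ chambersOf p | C ⊆ convexHull ℝ (Set.range p)}.ncard =
        Nat.choose k 4 + Nat.choose k 2 - k + 1 ∧
    (edgeBoundaryOf p {C ∈ chambersOf p | C ⊆ convexHull ℝ (Set.range p)}).ncard
        = k ∧
    ∃ c₁ c₂ : ℝ, 0 < c₁ ∧ 0 < c₂ ∧
      c₁ * ({C ∈ chambersOf p | C ⊆ convexHull ℝ (Set.range p)}.ncard : ℝ) ^
          ((1 : ℝ) / 4) ≤
        ((edgeBoundaryOf p
            {C ∈ chambersOf p | C ⊆ convexHull ℝ (Set.range p)}).ncard : ℝ) ∧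
      ((edgeBoundaryOf p
            {C ∈ chambersOf p | C ⊆ convexHull ℝ (Set.range p)}).ncard : ℝ) ≤
        c₂ * ({C ∈ chambersOf p | C ⊆ convexHull ℝ (Set.range p)}.ncard : ℝ) ^
          ((1 : ℝ) / 4) := by
  have hinj : Function.Injective p := by
    intro i j h
    by_contra hij
    apply hconv i
    rw [h]
    exact subset_convexHull ℝ _ ⟨j, fun h => hij h.symm, rfl⟩
  obtain ⟨σ, hσ⟩ := exists_sort p o r hr hcirc hinj
  have H : HH (p ∘ σ) := hσ
  have hrange : Set.range (p ∘ σ) = Set.range p := σ.surjective.range_comp p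
  have G : GG (p ∘ σ) := by
    apply GG_of hk H
    rw [hrange, linesOf_perm]
    exact hgen
  have hSS : SS (p ∘ σ) = {C ∈ chambersOf p | C ⊆ convexHull ℝ (Set.range p)} := by
    unfold SS
    rw [chambersOf_perm, hrange]
  have c1 := card_SS hk H G
  have c2 := card_boundary hk H
  rw [edge_perm, hSS] at c2
  rw [hSS] at c1
  refine ⟨c1, c2, ?_⟩
  rw [c2, c1]
  have hpos : (0 : ℝ) < ((k.choose 4 + k.choose 2 - k + 1 : ℕ) : ℝ) ^ ((1 : ℝ) / 4) := by
    apply Real.rpow_pos_of_pos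
    exact_mod_cast Nat.succ_pos _
  have hkp : (0 : ℝ) < k := by
    have : 0 < k := by omega
    exact_mod_cast this
  refine ⟨_, _, div_pos hkp hpos, div_pos hkp hpos, ?_, ?_⟩
  · rw [div_mul_cancel₀ _ hpos.ne']
  · rw [div_mul_cancel₀ _ hpos.ne']
end
end
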